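/- arXiv:0901.0929 — 2 statements merged into one kernel-verified Lean document; each statement's English description precedes it below -/
import Mathlib

section
/- Let k ≥ 1, let F₁,…,F_m be k-labeled finite simple graphs and let a₁,…,a_m ∈ ℝ. Then there exist finite simple graphs G₁,…,G_s and real numbers b₁,…,b_s such that for every W ∈ 𝒲: Σ_{j=1}^s b_j t(G_j,W) = 0 if and only if Σ_{i=1}^m a_i t^k(F_i,W)(x) = 0 for almost every x ∈ [0,1]^k. -/
open MeasureTheory
open scoped Classical

noncomputable section

/-- The unit interval `[0,1]` as a subset of `ℝ`. -/
def I01 : Set ℝ := Set.Icc 0 1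

/-- The cube `[0,1]^n`. -/
def cube (n : ℕ) : Set (Fin n → ℝ) := Set.univ.pi fun _ => I01

/-- `W` belongs to `𝒲`: a bounded symmetric measurable function on `[0,1]²`. -/
def memW (W : ℝ → ℝ → ℝ) : Prop :=
  Measurable (Function.uncurry W) ∧
  (∀ x ∈ I01, ∀ y ∈ I01, W x y = W y x) ∧
  ∃ C : ℝ, ∀ x ∈ I01, ∀ y ∈ I01, |W x y| ≤ C

/-- `W` belongs to `𝒲₀`: a graphon, i.e. symmetric measurable with values in `[0,1]`. -/
def memW0 (W : ℝ → ℝ → ℝ) : Prop :=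
  Measurable (Function.uncurry W) ∧
  (∀ x ∈ I01, ∀ y ∈ I01, W x y = W y x) ∧
  ∀ x ∈ I01, ∀ y ∈ I01, W x y ∈ Set.Icc (0 : ℝ) 1

/-- Homomorphism density `t(F,W)` of a finite simple graph `F` in `W`. -/
def homDensity {n : ℕ} (F : SimpleGraph (Fin n)) (W : ℝ → ℝ → ℝ) : ℝ :=
  ∫ x in cube n,
    ∏ p ∈ Finset.univ.filter (fun p : Fin n × Fin n => p.1 < p.2 ∧ F.Adj p.1 p.2),
      W (x p.1) (x p.2)

/-- Two kernels are weakly isomorphic if all their homomorphism densities agree. -/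
def WeaklyIsomorphic (U W : ℝ → ℝ → ℝ) : Prop :=
  ∀ (n : ℕ) (F : SimpleGraph (Fin n)), homDensity F U = homDensity F W

/-- `W` is finitely forcible within the class `A`. -/
def FinitelyForcible (A : (ℝ → ℝ → ℝ) → Prop) (W : ℝ → ℝ → ℝ) : Prop :=
  A W ∧ ∃ (k : ℕ) (n : Fin k → ℕ) (F : ∀ i, SimpleGraph (Fin (n i))),
    ∀ U, A U → (∀ i, homDensity (F i) U = homDensity (F i) W) → WeaklyIsomorphic U W

/-- Density function `t^k(F,W)` of a `k`-labeled graph, as a function of the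
labeled variables; the graph has `k` labeled and `m` unlabeled vertices. -/
def labDensity {k m : ℕ} (F : SimpleGraph (Fin (k + m))) (W : ℝ → ℝ → ℝ)
    (x : Fin k → ℝ) : ℝ :=
  ∫ y in cube m,
    ∏ p ∈ Finset.univ.filter
        (fun p : Fin (k + m) × Fin (k + m) => p.1 < p.2 ∧ F.Adj p.1 p.2),
      W (Fin.append x y p.1) (Fin.append x y p.2)

theorem bdd_integrable {X : Type*} [MeasurableSpace X] {μ : Measure X} [IsFiniteMeasure μ]
    {f : X → ℝ} (hf : Measurable f) {C : ℝ} (hC : ∀ x, |f x| ≤ C) : Integrable f μ :=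
  Integrable.of_bound hf.aestronglyMeasurable C (Filter.Eventually.of_forall hC)

theorem gram_zero_iff {X Z : Type*} [MeasurableSpace X] [MeasurableSpace Z]
    (μ : Measure X) (ν : Measure Z) [IsFiniteMeasure μ] [IsFiniteMeasure ν]
    (f : X × Z → ℝ) (hf : Measurable f) (C : ℝ) (hC : ∀ x, |f x| ≤ C) :
    (∀ᵐ p ∂(μ.prod μ), ∫ z, f (p.1, z) * f (p.2, z) ∂ν = 0) ↔
      ∀ᵐ q ∂(μ.prod ν), f q = 0 := by
  constructor
  · intro h
    have hfint : Integrable f (μ.prod ν) := bdd_integrable hf hC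
    have key : ∀ A : Set X, MeasurableSet A → ∀ᵐ z ∂ν, ∫ x in A, f (x, z) ∂μ = 0 := by
      intro A hA
      have hm : Measurable fun z => ∫ x in A, f (x, z) ∂μ := by
        refine (StronglyMeasurable.integral_prod_right' (f := fun q : Z × X => f (q.2, q.1))
          (ν := μ.restrict A) ?_).measurable
        exact (hf.comp (by fun_prop)).stronglyMeasurable
      have hmb : ∀ z, |∫ x in A, f (x, z) ∂μ| ≤ C * (μ.restrict A).real Set.univ := by
        intro z
        exact norm_integral_le_of_norm_le_const (f := fun x => f (x, z))
          (Filter.Eventually.of_forall fun x => hC (x, z))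
      have hsq : ∫ z, (∫ x in A, f (x, z) ∂μ) ^ 2 ∂ν = 0 := by
        have e1 : ∀ z, (∫ x in A, f (x, z) ∂μ) ^ 2 =
            ∫ p, f (p.1, z) * f (p.2, z) ∂((μ.restrict A).prod (μ.restrict A)) := by
          intro z
          rw [sq]
          exact (integral_prod_mul (fun x => f (x, z)) (fun x => f (x, z))).symm
        simp_rw [e1]
        rw [integral_integral_swap]
        · rw [Measure.prod_restrict]
          apply integral_eq_zero_of_ae
          exact ae_restrict_of_ae h
        · refine bdd_integrable (C := C * C) ?_ ?_
          · exact (hf.comp (g := f) (f := fun q : Z × (X × X) => (q.2.1, q.1)) (by fun_prop)).mul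
              (hf.comp (g := f) (f := fun q : Z × (X × X) => (q.2.2, q.1)) (by fun_prop))
          · rintro ⟨z, x, x'⟩
            simp only [Function.uncurry, abs_mul]
            exact mul_le_mul (hC _) (hC _) (abs_nonneg _) ((abs_nonneg _).trans (hC (x, z)))
      rw [integral_eq_zero_iff_of_nonneg (fun z => sq_nonneg _)] at hsq
      · filter_upwards [hsq] with z hz
        simpa using hz
      · refine bdd_integrable (C := (C * (μ.restrict A).real Set.univ) ^ 2) (hm.pow_const 2) ?_
        intro z
        rw [abs_pow]
        exact pow_le_pow_left₀ (abs_nonneg _) (hmb z) 2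
    refine hfint.ae_eq_zero_of_forall_setIntegral_eq_zero ?_
    intro s hs _
    have rect : ∀ A B, MeasurableSet A → MeasurableSet B →
        ∫ q in A ×ˢ B, f q ∂(μ.prod ν) = 0 := by
      intro A B hA hB
      rw [← Measure.prod_restrict, integral_prod_symm f]
      · exact integral_eq_zero_of_ae (ae_restrict_of_ae (key A hA))
      · exact bdd_integrable hf hC
    induction s, hs using MeasurableSpace.induction_on_inter generateFrom_prod.symm isPiSystem_prod with
    | empty => simp
    | basic t ht =>
      obtain ⟨A, hA, B, hB, rfl⟩ := ht
      exact rect A B hA hB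
    | compl t ht ih =>
      have h1 := integral_add_compl ht hfint
      have h2 := rect Set.univ Set.univ MeasurableSet.univ MeasurableSet.univ
      rw [Set.univ_prod_univ, setIntegral_univ] at h2
      have := ih (measure_lt_top _ _)
      linarith
    | iUnion g hd hm ih =>
      rw [integral_iUnion hm hd hfint.integrableOn]
      simp [fun i => ih i (measure_lt_top _ _)]
  · intro h
    have h1 := Measure.ae_ae_of_ae_prod h
    have h2 : ∀ᵐ p ∂(μ.prod μ), ∀ᵐ z ∂ν, f (p.1, z) = 0 :=
      Measure.quasiMeasurePreserving_fst.ae h1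
    filter_upwards [h2] with p hp
    apply integral_eq_zero_of_ae
    filter_upwards [hp] with z hz
    simp [hz]

/-- the uniform measure on `[0,1]` -/
def mu : Measure ℝ := volume.restrict I01

instance : IsProbabilityMeasure mu := ⟨by simp [mu, I01]⟩

/-- product over oriented edges -/
def ev {V : Type} (W : ℝ → ℝ → ℝ) (E : Finset (V × V)) (x : V → ℝ) : ℝ :=
  ∏ p ∈ E, W (x p.1) (x p.2)

/-- labelled density -/
def ld {S U : Type} [Fintype U] (W : ℝ → ℝ → ℝ) (E : Finset ((S ⊕ U) × (S ⊕ U)))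
    (x : S → ℝ) : ℝ :=
  ∫ y, ev W E (Sum.elim x y) ∂(Measure.pi fun _ : U => mu)

/-- everywhere symmetric bounded measurable -/
structure Good (W : ℝ → ℝ → ℝ) : Prop where
  meas : Measurable (Function.uncurry W)
  symm : ∀ x y, W x y = W y x
  bdd : ∃ C : ℝ, ∀ x y, |W x y| ≤ C

/-- quantum graphs with label set `S` -/
structure QG (S : Type) where
  M : Type
  fM : Fintype M
  U : M → Type
  fU : ∀ i, Fintype (U i)
  E : ∀ i, Finset ((S ⊕ U i) × (S ⊕ U i))
  a : M → ℝ

attribute [instance] QG.fM QG.fU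

/-- oriented simple graph -/
def Simp {V : Type} (E : Finset (V × V)) : Prop :=
  ∀ p q, (p, q) ∈ E → p ≠ q ∧ (q, p) ∉ E

/-- value of a quantum graph -/
def QG.val {S : Type} (Q : QG S) (W : ℝ → ℝ → ℝ) (x : S → ℝ) : ℝ :=
  ∑ i, Q.a i * ld W (Q.E i) x

theorem ev_meas {V : Type} {W : ℝ → ℝ → ℝ} (hW : Good W) (E : Finset (V × V)) :
    Measurable (ev W E) := by
  unfold ev
  refine Finset.measurable_prod _ fun p _ => ?_
  exact hW.meas.comp (f := fun x : V → ℝ => (x p.1, x p.2)) (by fun_prop)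

theorem ev_bdd {V : Type} {W : ℝ → ℝ → ℝ} (hW : Good W) (E : Finset (V × V)) :
    ∃ C, ∀ x, |ev W E x| ≤ C := by
  obtain ⟨C, hC⟩ := hW.bdd
  refine ⟨C ^ E.card, fun x => ?_⟩
  unfold ev
  rw [Finset.abs_prod, ← Finset.prod_const]
  exact Finset.prod_le_prod (fun _ _ => abs_nonneg _) fun _ _ => hC _ _

theorem sumElim_meas {S U : Type} :
    Measurable (fun q : (S → ℝ) × (U → ℝ) => (Sum.elim q.1 q.2 : S ⊕ U → ℝ)) := by
  rw [measurable_pi_iff]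
  rintro (i | i) <;> simp only [Sum.elim_inl, Sum.elim_inr] <;> fun_prop

theorem ld_meas {S U : Type} [Fintype U] {W : ℝ → ℝ → ℝ} (hW : Good W)
    (E : Finset ((S ⊕ U) × (S ⊕ U))) : Measurable (ld W E) := by
  unfold ld
  exact (StronglyMeasurable.integral_prod_right'
    (f := fun q : (S → ℝ) × (U → ℝ) => ev W E (Sum.elim q.1 q.2))
    (((ev_meas hW E).comp sumElim_meas).stronglyMeasurable)).measurable

theorem ld_bdd {S U : Type} [Fintype U] {W : ℝ → ℝ → ℝ} (hW : Good W)
    (E : Finset ((S ⊕ U) × (S ⊕ U))) : ∃ C, ∀ x, |ld W E x| ≤ C := by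
  obtain ⟨C, hC⟩ := ev_bdd hW E
  refine ⟨C, fun x => ?_⟩
  have := norm_integral_le_of_norm_le_const (μ := Measure.pi fun _ : U => mu)
    (f := fun y => ev W E (Sum.elim x y)) (Filter.Eventually.of_forall fun y => hC _)
  simpa [ld] using this

theorem QG.val_meas {S : Type} (Q : QG S) {W : ℝ → ℝ → ℝ} (hW : Good W) :
    Measurable (Q.val W) := by
  unfold QG.val
  exact Finset.measurable_sum _ fun i _ => (ld_meas hW _).const_mul _

theorem QG.val_bdd {S : Type} (Q : QG S) {W : ℝ → ℝ → ℝ} (hW : Good W) :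
    ∃ C, ∀ x, |Q.val W x| ≤ C := by
  choose C hC using fun i => ld_bdd hW (Q.E i)
  refine ⟨∑ i, |Q.a i| * C i, fun x => ?_⟩
  refine (Finset.abs_sum_le_sum_abs _ _).trans (Finset.sum_le_sum fun i _ => ?_)
  rw [abs_mul]
  exact mul_le_mul_of_nonneg_left (hC i x) (abs_nonneg _)

theorem ev_image {V V' : Type} [DecidableEq (V' × V')] (W : ℝ → ℝ → ℝ) (E : Finset (V × V)) (f : V → V')
    (hf : Function.Injective f) (x : V' → ℝ) :
    ev W (E.image (Prod.map f f)) x = ev W E (x ∘ f) := by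
  unfold ev
  rw [Finset.prod_image (fun a _ b _ h => (hf.prodMap hf) h)]
  rfl

section Glue

variable {S : Type} (p : S → Prop)

/-- glue labelled values -/
def glue (w : Subtype p → ℝ) (z : {v // ¬ p v} → ℝ) : S → ℝ :=
  fun v => if h : p v then w ⟨v, h⟩ else z ⟨v, h⟩

/-- first copy -/
def emb1 (U₁ U₂ : Type) : S ⊕ U₁ → (Subtype p ⊕ Subtype p) ⊕ ({v // ¬ p v} ⊕ (U₁ ⊕ U₂))
  | .inl v => if h : p v then .inl (.inl ⟨v, h⟩) else .inr (.inl ⟨v, h⟩)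
  | .inr u => .inr (.inr (.inl u))

/-- second copy -/
def emb2 (U₁ U₂ : Type) : S ⊕ U₂ → (Subtype p ⊕ Subtype p) ⊕ ({v // ¬ p v} ⊕ (U₁ ⊕ U₂))
  | .inl v => if h : p v then .inl (.inr ⟨v, h⟩) else .inr (.inl ⟨v, h⟩)
  | .inr u => .inr (.inr (.inr u))

theorem emb1_inj (U₁ U₂ : Type) : Function.Injective (emb1 p U₁ U₂) := by
  rintro (a | a) (b | b) h <;> simp only [emb1] at h <;> (try split_ifs at h) <;> simp_all

theorem emb2_inj (U₁ U₂ : Type) : Function.Injective (emb2 p U₁ U₂) := by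
  rintro (a | a) (b | b) h <;> simp only [emb2] at h <;> (try split_ifs at h) <;> simp_all

theorem emb_eq {U₁ U₂ : Type} {a b} (h : emb1 p U₁ U₂ a = emb2 p U₁ U₂ b) :
    ∃ v, ¬ p v ∧ a = .inl v ∧ b = .inl v := by
  rcases a with a | a <;> rcases b with b | b <;> simp only [emb1, emb2] at h <;>
    (try split_ifs at h) <;> simp_all

theorem elim_emb1 {U₁ U₂ : Type} (w : Subtype p ⊕ Subtype p → ℝ)
    (z : {v // ¬ p v} → ℝ) (y₁ : U₁ → ℝ) (y₂ : U₂ → ℝ) :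
    Sum.elim w (Sum.elim z (Sum.elim y₁ y₂)) ∘ emb1 p U₁ U₂ =
      Sum.elim (glue p (w ∘ Sum.inl) z) y₁ := by
  ext (v | v)
  · by_cases h : p v <;> simp [emb1, glue, h]
  · simp [emb1]

theorem elim_emb2 {U₁ U₂ : Type} (w : Subtype p ⊕ Subtype p → ℝ)
    (z : {v // ¬ p v} → ℝ) (y₁ : U₁ → ℝ) (y₂ : U₂ → ℝ) :
    Sum.elim w (Sum.elim z (Sum.elim y₁ y₂)) ∘ emb2 p U₁ U₂ =
      Sum.elim (glue p (w ∘ Sum.inr) z) y₂ := by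
  ext (v | v)
  · by_cases h : p v <;> simp [emb2, glue, h]
  · simp [emb2]

/-- glued edge set -/
def gE {U₁ U₂ : Type} (E₁ : Finset ((S ⊕ U₁) × (S ⊕ U₁))) (E₂ : Finset ((S ⊕ U₂) × (S ⊕ U₂))) :
    Finset (((Subtype p ⊕ Subtype p) ⊕ ({v // ¬ p v} ⊕ (U₁ ⊕ U₂))) ×
      ((Subtype p ⊕ Subtype p) ⊕ ({v // ¬ p v} ⊕ (U₁ ⊕ U₂)))) :=
  E₁.image (Prod.map (emb1 p U₁ U₂) (emb1 p U₁ U₂)) ∪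
    E₂.image (Prod.map (emb2 p U₁ U₂) (emb2 p U₁ U₂))

theorem integral_sumPi {A B : Type} [Fintype A] [Fintype B] (f : (A ⊕ B → ℝ) → ℝ) :
    ∫ y, f y ∂(Measure.pi fun _ : A ⊕ B => mu) =
      ∫ q, f (Sum.elim q.1 q.2)
        ∂((Measure.pi fun _ : A => mu).prod (Measure.pi fun _ : B => mu)) := by
  rw [← (measurePreserving_sumPiEquivProdPi_symm (fun _ : A ⊕ B => mu)).integral_comp']
  refine integral_congr_ae (Filter.Eventually.of_forall fun q => ?_)
  simp only
  congr 1

theorem ld_glue [Fintype S] {U₁ U₂ : Type} [Fintype U₁] [Fintype U₂] {W : ℝ → ℝ → ℝ}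
    (hW : Good W)
    (E₁ : Finset ((S ⊕ U₁) × (S ⊕ U₁))) (E₂ : Finset ((S ⊕ U₂) × (S ⊕ U₂)))
    (h1 : ∀ v w, ¬ p v → ¬ p w → (Sum.inl v, Sum.inl w) ∉ E₁)
    (w : Subtype p ⊕ Subtype p → ℝ) :
    ld W (gE p E₁ E₂) w =
      ∫ z, ld W E₁ (glue p (w ∘ Sum.inl) z) * ld W E₂ (glue p (w ∘ Sum.inr) z)
        ∂(Measure.pi fun _ : {v // ¬ p v} => mu) := by
  have hev : ∀ x, ev W (gE p E₁ E₂) x =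
      ev W E₁ (x ∘ emb1 p U₁ U₂) * ev W E₂ (x ∘ emb2 p U₁ U₂) := by
    intro x
    rw [← ev_image W E₁ _ (emb1_inj p U₁ U₂), ← ev_image W E₂ _ (emb2_inj p U₁ U₂)]
    unfold ev gE
    rw [Finset.prod_union]
    rw [Finset.disjoint_left]
    rintro q hq hq'
    rw [Finset.mem_image] at hq hq'
    obtain ⟨⟨a, b⟩, hab, rfl⟩ := hq
    obtain ⟨⟨c, d⟩, hcd, h⟩ := hq'
    simp only [Prod.map, Prod.mk.injEq] at h
    obtain ⟨v, hv, rfl, -⟩ := emb_eq p h.1.symm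
    obtain ⟨v', hv', rfl, -⟩ := emb_eq p h.2.symm
    exact h1 _ _ hv hv' hab
  unfold ld
  simp_rw [hev]
  rw [integral_sumPi, integral_prod]
  · refine integral_congr_ae (Filter.Eventually.of_forall fun z => ?_)
    simp only
    rw [integral_sumPi, ← integral_prod_mul]
    refine integral_congr_ae (Filter.Eventually.of_forall fun y => ?_)
    simp only [elim_emb1, elim_emb2]
  · obtain ⟨C, hC⟩ := ev_bdd hW (gE p E₁ E₂)
    simp_rw [← hev]
    refine bdd_integrable (C := C) ?_ (fun q => hC _)
    refine (ev_meas hW _).comp ?_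
    exact sumElim_meas.comp (f := fun q : ({v // ¬ p v} → ℝ) × (U₁ ⊕ U₂ → ℝ) => (w, Sum.elim q.1 q.2))
      (measurable_const.prodMk sumElim_meas)

/-- glued quantum graph -/
def QG.glue (Q : QG S) [Fintype S] : QG (Subtype p ⊕ Subtype p) where
  M := Q.M × Q.M
  fM := inferInstance
  U := fun i => {v // ¬ p v} ⊕ (Q.U i.1 ⊕ Q.U i.2)
  fU := fun _ => inferInstance
  E := fun i => gE p (Q.E i.1) (Q.E i.2)
  a := fun i => Q.a i.1 * Q.a i.2

theorem glue_meas : Measurable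
    (fun q : (Subtype p → ℝ) × ({v // ¬ p v} → ℝ) => _root_.glue p q.1 q.2) := by
  rw [measurable_pi_iff]
  intro v
  by_cases h : p v <;> simp only [_root_.glue, h, dite_true, dite_false] <;> fun_prop

theorem QG.glue_val [Fintype S] (Q : QG S)
    (h1 : ∀ i v w, ¬ p v → ¬ p w → (Sum.inl v, Sum.inl w) ∉ Q.E i) {W : ℝ → ℝ → ℝ}
    (hW : Good W) (w : Subtype p ⊕ Subtype p → ℝ) :
    (Q.glue p).val W w =
      ∫ z, Q.val W (_root_.glue p (w ∘ Sum.inl) z) * Q.val W (_root_.glue p (w ∘ Sum.inr) z)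
        ∂(Measure.pi fun _ : {v // ¬ p v} => mu) := by
  have e : ∀ z, Q.val W (_root_.glue p (w ∘ Sum.inl) z) * Q.val W (_root_.glue p (w ∘ Sum.inr) z)
      = ∑ i : Q.M × Q.M, Q.a i.1 * Q.a i.2 * (ld W (Q.E i.1) (_root_.glue p (w ∘ Sum.inl) z) *
        ld W (Q.E i.2) (_root_.glue p (w ∘ Sum.inr) z)) := by
    intro z
    unfold QG.val
    rw [Finset.sum_mul_sum, ← Finset.univ_product_univ, Finset.sum_product]
    refine Finset.sum_congr rfl fun i _ => Finset.sum_congr rfl fun j _ => ?_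
    ring
  simp_rw [e]
  rw [integral_finsetSum]
  · refine Finset.sum_congr rfl fun i _ => ?_
    rw [integral_const_mul]
    congr 1
    exact ld_glue p hW _ _ (h1 i.1) w
  · intro i _
    refine Integrable.const_mul ?_ _
    obtain ⟨C, hC⟩ := ld_bdd hW (Q.E i.1)
    obtain ⟨D, hD⟩ := ld_bdd hW (Q.E i.2)
    refine bdd_integrable (C := C * D) (Measurable.mul ?_ ?_) ?_
    · exact (ld_meas hW _).comp ((glue_meas p).comp (f := fun z => (w ∘ Sum.inl, z))
        (measurable_const.prodMk measurable_id))
    · exact (ld_meas hW _).comp ((glue_meas p).comp (f := fun z => (w ∘ Sum.inr, z))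
        (measurable_const.prodMk measurable_id))
    · intro z
      rw [abs_mul]
      exact mul_le_mul (hC _) (hD _) (abs_nonneg _) ((abs_nonneg _).trans (hC (fun _ => 0)))

theorem QG.glue_zero [Fintype S] (Q : QG S)
    (h1 : ∀ i v w, ¬ p v → ¬ p w → (Sum.inl v, Sum.inl w) ∉ Q.E i) {W : ℝ → ℝ → ℝ}
    (hW : Good W) :
    (∀ᵐ w ∂(Measure.pi fun _ => mu), (Q.glue p).val W w = 0) ↔
      ∀ᵐ x ∂(Measure.pi fun _ => mu), Q.val W x = 0 := by
  obtain ⟨C, hC⟩ := Q.val_bdd hW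
  have g := gram_zero_iff (Measure.pi fun _ : Subtype p => mu)
    (Measure.pi fun _ : {v // ¬ p v} => mu) (fun q => Q.val W (_root_.glue p q.1 q.2))
    ((Q.val_meas hW).comp (glue_meas p)) C (fun q => hC _)
  have m1 := measurePreserving_sumPiEquivProdPi (fun _ : Subtype p ⊕ Subtype p => mu)
  have m2 := (measurePreserving_piEquivPiSubtypeProd (fun _ : S => mu) p)
  rw [← m1.map_eq, ← m2.map_eq, (MeasurableEquiv.measurableEmbedding _).ae_map_iff,
    (MeasurableEquiv.measurableEmbedding _).ae_map_iff] at g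
  simp_rw [QG.glue_val p Q h1 hW]
  refine g.trans ?_
  refine Filter.eventually_congr (Filter.Eventually.of_forall fun x => ?_)
  have : _root_.glue p (MeasurableEquiv.piEquivPiSubtypeProd (fun _ : S => ℝ) p x).1
      (MeasurableEquiv.piEquivPiSubtypeProd (fun _ : S => ℝ) p x).2 = x := by
    ext v
    by_cases h : p v <;> simp [_root_.glue, h, MeasurableEquiv.piEquivPiSubtypeProd]
  rw [this]

end Glue

/-- simple, with labelled edges properly coloured -/
def QG.Col {S : Type} (Q : QG S) (c : S → ℕ) : Prop :=
  ∀ i, Simp (Q.E i) ∧ ∀ v w, (Sum.inl v, Sum.inl w) ∈ Q.E i → c v ≠ c w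

theorem gE_simp {S : Type} (p : S → Prop) {U₁ U₂ : Type}
    (E₁ : Finset ((S ⊕ U₁) × (S ⊕ U₁))) (E₂ : Finset ((S ⊕ U₂) × (S ⊕ U₂)))
    (h1 : ∀ v w, ¬ p v → ¬ p w → (Sum.inl v, Sum.inl w) ∉ E₁)
    (s1 : Simp E₁) (s2 : Simp E₂) : Simp (gE p E₁ E₂) := by
  intro a b hab
  simp only [gE, Finset.mem_union, Finset.mem_image, Prod.exists, Prod.map, Prod.mk.injEq] at hab ⊢
  rcases hab with ⟨u, v, huv, rfl, rfl⟩ | ⟨u, v, huv, rfl, rfl⟩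
  · refine ⟨fun h => (s1 _ _ huv).1 (emb1_inj p _ _ h), ?_⟩
    rintro (⟨u', v', huv', h, h'⟩ | ⟨u', v', huv', h, h'⟩)
    · rw [emb1_inj p _ _ h, emb1_inj p _ _ h'] at huv'
      exact (s1 _ _ huv).2 huv'
    · obtain ⟨a, ha, rfl, -⟩ := emb_eq p h.symm
      obtain ⟨b, hb, rfl, -⟩ := emb_eq p h'.symm
      exact h1 _ _ hb ha huv
  · refine ⟨fun h => (s2 _ _ huv).1 (emb2_inj p _ _ h), ?_⟩
    rintro (⟨u', v', huv', h, h'⟩ | ⟨u', v', huv', h, h'⟩)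
    · obtain ⟨a, ha, rfl, -⟩ := emb_eq p h
      obtain ⟨b, hb, rfl, -⟩ := emb_eq p h'
      exact h1 _ _ ha hb huv'
    · rw [emb2_inj p _ _ h, emb2_inj p _ _ h'] at huv'
      exact (s2 _ _ huv).2 huv'

theorem emb1_inl {S : Type} (p : S → Prop) {U₁ U₂ : Type} {u} {t}
    (h : emb1 p U₁ U₂ u = .inl t) : ∃ v, t = .inl v ∧ u = .inl v.1 := by
  rcases u with u | u <;> simp only [emb1] at h
  · split_ifs at h with hp
    exact ⟨⟨u, hp⟩, (Sum.inl.inj h).symm, rfl⟩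
  · exact absurd h (by simp)

theorem emb2_inl {S : Type} (p : S → Prop) {U₁ U₂ : Type} {u} {t}
    (h : emb2 p U₁ U₂ u = .inl t) : ∃ v, t = .inr v ∧ u = .inl v.1 := by
  rcases u with u | u <;> simp only [emb2] at h
  · split_ifs at h with hp
    exact ⟨⟨u, hp⟩, (Sum.inl.inj h).symm, rfl⟩
  · exact absurd h (by simp)

theorem QG.glue_col {S : Type} [Fintype S] (p : S → Prop) (Q : QG S) (c : S → ℕ)
    (hQ : Q.Col c)
    (h1 : ∀ i v w, ¬ p v → ¬ p w → (Sum.inl v, Sum.inl w) ∉ Q.E i) :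
    (Q.glue p).Col (Sum.elim (fun v => c v.1) (fun v => c v.1)) := by
  intro i
  refine ⟨gE_simp p _ _ (h1 i.1) (hQ i.1).1 (hQ i.2).1, ?_⟩
  intro v w hvw
  change (Sum.inl v, Sum.inl w) ∈ gE p (Q.E i.1) (Q.E i.2) at hvw
  simp only [gE, Finset.mem_union, Finset.mem_image, Prod.exists, Prod.map, Prod.mk.injEq] at hvw
  rcases hvw with ⟨a, b, hab, ha, hb⟩ | ⟨a, b, hab, ha, hb⟩
  · obtain ⟨v', rfl, rfl⟩ := emb1_inl p ha
    obtain ⟨w', rfl, rfl⟩ := emb1_inl p hb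
    exact (hQ i.1).2 _ _ hab
  · obtain ⟨v', rfl, rfl⟩ := emb2_inl p ha
    obtain ⟨w', rfl, rfl⟩ := emb2_inl p hb
    exact (hQ i.2).2 _ _ hab

theorem cube_restrict (n : ℕ) :
    (volume : Measure (Fin n → ℝ)).restrict (cube n) = Measure.pi fun _ => mu := by
  rw [volume_pi]
  exact Measure.restrict_pi_pi (fun _ : Fin n => (volume : Measure ℝ)) (fun _ => I01)

theorem base_graph {S U : Type} [IsEmpty S] [Fintype U] (E : Finset ((S ⊕ U) × (S ⊕ U)))
    (hE : Simp E) :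
    ∃ (n : ℕ) (G : SimpleGraph (Fin n)), ∀ W, Good W → ∀ x, homDensity G W = ld W E x := by
  let e := Fintype.equivFin U
  let f : Fin (Fintype.card U) → S ⊕ U := fun i => .inr (e.symm i)
  let g : S ⊕ U → Fin (Fintype.card U) := Sum.elim (fun s => isEmptyElim s) e
  have fg : ∀ v, f (g v) = v := by
    rintro (s | u)
    · exact isEmptyElim s
    · simp [f, g]
  have gf : ∀ v, g (f v) = v := by intro v; simp [f, g]
  refine ⟨Fintype.card U, ⟨fun i j => (f i, f j) ∈ E ∨ (f j, f i) ∈ E, ?_, ?_⟩, ?_⟩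
  · exact ⟨fun i j h => h.symm⟩
  · constructor
    intro i h
    have : (f i, f i) ∈ E := h.elim id id
    exact (hE _ _ this).1 rfl
  intro W hW x
  unfold homDensity ld
  rw [cube_restrict]
  rw [← (measurePreserving_piCongrLeft (fun _ : Fin (Fintype.card U) => mu) e).integral_comp']
  refine integral_congr_ae (Filter.Eventually.of_forall fun y => ?_)
  simp only
  have hy : ∀ v, MeasurableEquiv.piCongrLeft (fun _ : Fin (Fintype.card U) => ℝ) e y (g v) =
      Sum.elim x y v := by
    rintro (s | u)
    · exact isEmptyElim s
    · simp only [g, Sum.elim_inr]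
      rw [MeasurableEquiv.coe_piCongrLeft]
      exact Equiv.piCongrLeft_apply_apply (fun _ => ℝ) e y u
  unfold ev
  symm
  refine Finset.prod_nbij' (fun p => if g p.1 < g p.2 then (g p.1, g p.2) else (g p.2, g p.1))
    (fun q => if (f q.1, f q.2) ∈ E then (f q.1, f q.2) else (f q.2, f q.1)) ?_ ?_ ?_ ?_ ?_
  · rintro ⟨a, b⟩ hab
    have hne : g a ≠ g b := fun h => (hE _ _ hab).1 (by rw [← fg a, ← fg b, h])
    simp only [Finset.mem_filter, Finset.mem_univ, true_and]
    split_ifs with h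
    · exact ⟨h, by simpa [fg] using Or.inl hab⟩
    · exact ⟨lt_of_le_of_ne (not_lt.1 h) hne.symm, by simpa [fg] using Or.inr hab⟩
  · rintro ⟨i, j⟩ hij
    simp only [Finset.mem_filter, Finset.mem_univ, true_and] at hij ⊢
    split_ifs with h
    · exact h
    · exact hij.2.resolve_left h
  · rintro ⟨a, b⟩ hab
    simp only
    split_ifs with h1 h2 h2 <;> simp only [fg] at h2 ⊢
    · exact absurd hab h2
    · exact absurd h2 (hE _ _ hab).2
  · rintro ⟨i, j⟩ hij
    simp only [Finset.mem_filter, Finset.mem_univ, true_and] at hij ⊢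
    have := hij.1
    split_ifs with h1 h2 h2 <;> simp only [gf] at h2 ⊢
    · exact absurd this h2
    · exact absurd this (not_lt.2 h2.le)
  · rintro ⟨a, b⟩ hab
    simp only
    split_ifs with h
    · simp only [hy]
    · simp only [hy]
      exact hW.symm _ _

theorem QG.main (k : ℕ) : ∀ (S : Type) [Fintype S] (c : S → ℕ), (∀ v, c v < k) →
    ∀ Q : QG S, Q.Col c →
    ∃ (s : ℕ) (n : Fin s → ℕ) (G : ∀ j, SimpleGraph (Fin (n j))) (b : Fin s → ℝ),
      ∀ W : ℝ → ℝ → ℝ, Good W →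
        ((∑ j, b j * homDensity (G j) W) = 0 ↔
          ∀ᵐ x ∂(Measure.pi fun _ : S => mu), Q.val W x = 0) := by
  induction k with
  | zero =>
    intro S _ c hc Q hQ
    have : IsEmpty S := ⟨fun v => absurd (hc v) (Nat.not_lt_zero _)⟩
    choose n G hG using fun i => base_graph (Q.E i) (hQ i).1
    let e := Fintype.equivFin Q.M
    refine ⟨Fintype.card Q.M, fun j => n (e.symm j), fun j => G (e.symm j),
      fun j => Q.a (e.symm j), fun W hW => ?_⟩
    have hv : ∀ x, Q.val W x = ∑ j, Q.a (e.symm j) * homDensity (G (e.symm j)) W := by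
      intro x
      rw [Equiv.sum_comp e.symm (fun i => Q.a i * homDensity (G i) W)]
      exact Finset.sum_congr rfl fun i _ => by rw [hG i W hW x]
    simp only [hv, Filter.eventually_const]
  | succ k ih =>
    intro S _ c hc Q hQ
    obtain ⟨p, hp⟩ : ∃ p : S → Prop, ∀ v, p v ↔ c v < k := ⟨_, fun _ => Iff.rfl⟩
    have h1 : ∀ i v w, ¬ p v → ¬ p w → (Sum.inl v, Sum.inl w) ∉ Q.E i := by
      intro i v w hv hw h
      have hne := (hQ i).2 v w h
      have a1 := hc v
      have a2 := hc w
      rw [hp] at hv hw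
      omega
    obtain ⟨s, n, G, b, h⟩ := ih (Subtype p ⊕ Subtype p)
      (Sum.elim (fun v => c v.1) (fun v => c v.1))
      (by rintro (v | v) <;> exact (hp _).1 v.2) (Q.glue p) (Q.glue_col p c hQ h1)
    exact ⟨s, n, G, b, fun W hW => (h W hW).trans (Q.glue_zero p h1 hW)⟩

/-- extension by zero off the unit square -/
def ext0 (W : ℝ → ℝ → ℝ) : ℝ → ℝ → ℝ :=
  fun x y => if x ∈ I01 ∧ y ∈ I01 then W x y else 0

theorem ext0_good {W : ℝ → ℝ → ℝ} (hW : memW W) : Good (ext0 W) := by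
  obtain ⟨hm, hs, C, hC⟩ := hW
  have hI : MeasurableSet I01 := measurableSet_Icc
  refine ⟨?_, ?_, |C|, ?_⟩
  · exact Measurable.ite (p := fun q : ℝ × ℝ => q.1 ∈ I01 ∧ q.2 ∈ I01) (hI.prod hI) hm measurable_const
  · intro x y
    unfold ext0
    by_cases h : x ∈ I01 ∧ y ∈ I01
    · rw [if_pos h, if_pos h.symm, hs _ h.1 _ h.2]
    · rw [if_neg h, if_neg (fun h' => h h'.symm)]
  · intro x y
    unfold ext0
    split_ifs with h
    · exact (hC _ h.1 _ h.2).trans (le_abs_self C)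
    · simp

theorem cube_meas (n : ℕ) : MeasurableSet (cube n) :=
  MeasurableSet.univ_pi fun _ => measurableSet_Icc

theorem homDensity_ext0 {n : ℕ} (G : SimpleGraph (Fin n)) (W : ℝ → ℝ → ℝ) :
    homDensity G W = homDensity G (ext0 W) := by
  unfold homDensity
  refine setIntegral_congr_fun (cube_meas n) fun x hx => ?_
  refine Finset.prod_congr rfl fun p _ => ?_
  unfold ext0
  rw [if_pos ⟨hx p.1 trivial, hx p.2 trivial⟩]

theorem labDensity_ext0 {k m : ℕ} (F : SimpleGraph (Fin (k + m))) (W : ℝ → ℝ → ℝ)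
    (x : Fin k → ℝ) (hx : x ∈ cube k) :
    labDensity F W x = labDensity F (ext0 W) x := by
  unfold labDensity
  refine setIntegral_congr_fun (cube_meas m) fun y hy => ?_
  have hxy : ∀ i, Fin.append x y i ∈ I01 := by
    intro i
    refine Fin.addCases (fun i => ?_) (fun i => ?_) i
    · rw [Fin.append_left]; exact hx i trivial
    · rw [Fin.append_right]; exact hy i trivial
  refine Finset.prod_congr rfl fun p _ => ?_
  unfold ext0
  rw [if_pos ⟨hxy _, hxy _⟩]

/-- edges of a labelled graph as a set of oriented pairs -/
def labE {k m : ℕ} (F : SimpleGraph (Fin (k + m))) :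
    Finset ((Fin k ⊕ Fin m) × (Fin k ⊕ Fin m)) :=
  (Finset.univ.filter
    (fun p : Fin (k + m) × Fin (k + m) => p.1 < p.2 ∧ F.Adj p.1 p.2)).image
    (Prod.map finSumFinEquiv.symm finSumFinEquiv.symm)

theorem labE_mem {k m : ℕ} (F : SimpleGraph (Fin (k + m))) {a b}
    (h : (a, b) ∈ labE F) : finSumFinEquiv a < finSumFinEquiv b := by
  simp only [labE, Finset.mem_image, Finset.mem_filter, Finset.mem_univ, true_and, Prod.exists,
    Prod.map, Prod.mk.injEq] at h
  obtain ⟨u, v, huv, rfl, rfl⟩ := h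
  simpa using huv.1

theorem labE_simp {k m : ℕ} (F : SimpleGraph (Fin (k + m))) : Simp (labE F) := by
  intro a b h
  have h1 := labE_mem F h
  refine ⟨?_, fun h' => lt_asymm h1 (labE_mem F h')⟩
  rintro rfl
  exact lt_irrefl _ h1

theorem ld_labE {k m : ℕ} (F : SimpleGraph (Fin (k + m))) (W : ℝ → ℝ → ℝ) (x : Fin k → ℝ) :
    ld W (labE F) x = labDensity F W x := by
  unfold ld labDensity
  rw [cube_restrict]
  refine integral_congr_ae (Filter.Eventually.of_forall fun y => ?_)
  simp only [labE]
  rw [ev_image _ _ _ finSumFinEquiv.symm.injective]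
  have : Sum.elim x y ∘ finSumFinEquiv.symm = Fin.append x y := by
    ext i
    refine Fin.addCases (fun i => ?_) (fun i => ?_) i <;> simp
  rw [this]
  rfl

/-- any finite linear condition on `k`-labeled densities holding almost
everywhere can be expressed by a single finite linear condition on (unlabeled)
homomorphism densities. -/
theorem statement1 (k : ℕ) (hk : 1 ≤ k) (M : ℕ) (m : Fin M → ℕ)
    (F : ∀ i, SimpleGraph (Fin (k + m i))) (a : Fin M → ℝ) :
    ∃ (s : ℕ) (n : Fin s → ℕ) (G : ∀ j, SimpleGraph (Fin (n j))) (b : Fin s → ℝ),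
      ∀ W : ℝ → ℝ → ℝ, memW W →
        ((∑ j, b j * homDensity (G j) W) = 0 ↔
          ∀ᵐ x ∂(volume.restrict (cube k)), (∑ i, a i * labDensity (F i) W x) = 0) := by
  let Q : QG (Fin k) :=
    { M := Fin M
      fM := inferInstance
      U := fun i => Fin (m i)
      fU := fun _ => inferInstance
      E := fun i => labE (F i)
      a := a }
  have hQ : Q.Col (fun v => v.1) := by
    intro i
    refine ⟨labE_simp (F i), fun v w h e => ?_⟩
    obtain rfl : v = w := Fin.ext e
    exact (labE_simp (F i) _ _ h).1 rfl
  obtain ⟨s, n, G, b, h⟩ := QG.main k (Fin k) (fun v => v.1) (fun v => v.2) Q hQ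
  refine ⟨s, n, G, b, fun W hW => ?_⟩
  have h' := h (ext0 W) (ext0_good hW)
  simp only [← homDensity_ext0] at h'
  rw [h', ← cube_restrict]
  refine Filter.eventually_congr ?_
  filter_upwards [ae_restrict_mem (cube_meas k)] with x hx
  have : Q.val (ext0 W) x = ∑ i, a i * labDensity (F i) W x := by
    refine Finset.sum_congr rfl fun i _ => ?_
    rw [labDensity_ext0 (F i) W x hx, ← ld_labE]
  rw [this]
end
end

section
/- Let p(z) = a₁z + a₂z² + … + a_nzⁿ be a real polynomial with zero constant term which is a bijection from ℝ to ℝ, and let W ∈ 𝒲. If p(W), defined by substituting W into p as an integral kernel operator, is finitely forcible in 𝒲, then W is finitely forcible in 𝒲. -/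
open MeasureTheory
open scoped Classical

noncomputable section

/-- Kernel-operator product `(U∘V)(x,y) = ∫₀¹ U(x,z)V(z,y) dz`. -/
def kerMul (U V : ℝ → ℝ → ℝ) : ℝ → ℝ → ℝ :=
  fun x y => ∫ z in I01, U x z * V z y

/-- `kerPow U i = U^{∘(i+1)}`, the `(i+1)`-st kernel-operator power of `U`. -/
def kerPow (U : ℝ → ℝ → ℝ) : ℕ → (ℝ → ℝ → ℝ)
  | 0 => U
  | i + 1 => kerMul (kerPow U i) U

/-- `p(U) = Σ_{i=1}^n a_i U^{∘i}` where `a i` is the coefficient of `z^{i+1}`. -/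
def kerPoly (n : ℕ) (a : Fin n → ℝ) (U : ℝ → ℝ → ℝ) : ℝ → ℝ → ℝ :=
  fun x y => ∑ i, a i * kerPow U i x y


/-- Lebesgue measure on the unit interval. -/
def muI : Measure ℝ := volume.restrict I01

instance muI_prob : IsProbabilityMeasure muI := ⟨by simp [muI, I01]⟩

/-- Bounded measurable kernels. -/
def Kn (A : ℝ → ℝ → ℝ) : Prop :=
  Measurable (Function.uncurry A) ∧ ∃ C : ℝ, ∀ x y, |A x y| ≤ C

lemma Kn.meas {A : ℝ → ℝ → ℝ} (hA : Kn A) {α : Type*} [MeasurableSpace α] {f g : α → ℝ}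
    (hf : Measurable f) (hg : Measurable g) : Measurable fun t => A (f t) (g t) :=
  hA.1.comp (hf.prodMk hg)

lemma kerMul_eq (A B : ℝ → ℝ → ℝ) (x y : ℝ) :
    kerMul A B x y = ∫ z, A x z * B z y ∂muI := rfl

lemma Kn.mul {A B : ℝ → ℝ → ℝ} (hA : Kn A) (hB : Kn B) : Kn (kerMul A B) := by
  refine ⟨?_, ?_⟩
  · have h : StronglyMeasurable (fun q : (ℝ × ℝ) × ℝ => A q.1.1 q.2 * B q.2 q.1.2) := by
      apply Measurable.stronglyMeasurable
      exact (hA.meas (by fun_prop) (by fun_prop)).mul (hB.meas (by fun_prop) (by fun_prop))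
    exact (h.integral_prod_right (ν := muI)).measurable
  · obtain ⟨C, hC⟩ := hA.2
    obtain ⟨C', hC'⟩ := hB.2
    refine ⟨C * C', fun x y => ?_⟩
    rw [kerMul_eq, ← Real.norm_eq_abs]
    have := norm_integral_le_of_norm_le_const (μ := muI) (C := C * C')
      (f := fun z => A x z * B z y) (Filter.Eventually.of_forall fun z => by
        rw [Real.norm_eq_abs, abs_mul]
        exact mul_le_mul (hC _ _) (hC' _ _) (abs_nonneg _) ((abs_nonneg _).trans (hC x z)))
    simpa using this

lemma Kn.pow {A : ℝ → ℝ → ℝ} (hA : Kn A) (k : ℕ) : Kn (kerPow A k) := by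
  induction k with
  | zero => exact hA
  | succ k ih => exact ih.mul hA

lemma Kn.sum {ι : Type*} (s : Finset ι) (c : ι → ℝ) {A : ι → ℝ → ℝ → ℝ} (hA : ∀ i, Kn (A i)) :
    Kn (fun x y => ∑ i ∈ s, c i * A i x y) := by
  refine ⟨?_, ?_⟩
  · exact Finset.measurable_sum s fun i _ =>
      (((hA i).meas measurable_fst measurable_snd).const_mul (c i))
  · choose C hC using fun i => (hA i).2
    refine ⟨∑ i ∈ s, |c i| * C i, fun x y => (Finset.abs_sum_le_sum_abs _ _).trans ?_⟩
    refine Finset.sum_le_sum fun i _ => ?_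
    rw [abs_mul]
    exact mul_le_mul_of_nonneg_left (hC i x y) (abs_nonneg _)

lemma Kn.sub {A B : ℝ → ℝ → ℝ} (hA : Kn A) (hB : Kn B) : Kn (fun x y => A x y - B x y) := by
  refine ⟨(hA.meas measurable_fst measurable_snd).sub (hB.meas measurable_fst measurable_snd), ?_⟩
  obtain ⟨C, hC⟩ := hA.2
  obtain ⟨C', hC'⟩ := hB.2
  exact ⟨C + C', fun x y => (abs_sub _ _).trans (add_le_add (hC _ _) (hC' _ _))⟩

/-- product measure on the cube. -/
def piI (N : ℕ) : Measure (Fin N → ℝ) := Measure.pi fun _ => muI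

instance piI_prob (N : ℕ) : IsProbabilityMeasure (piI N) := by unfold piI; infer_instance

lemma restrict_cube (N : ℕ) : (volume : Measure (Fin N → ℝ)).restrict (cube N) = piI N := by
  unfold cube piI muI
  rw [volume_pi, Measure.restrict_pi_pi]

/-- Integral of a product of kernels, one for each directed edge. -/
def DD {N : ℕ} (E : Finset (Fin N × Fin N)) (K : Fin N × Fin N → ℝ → ℝ → ℝ) : ℝ :=
  ∫ x, ∏ e ∈ E, K e (x e.1) (x e.2) ∂(piI N)

lemma prod_bdd_meas {N : ℕ} (E : Finset (Fin N × Fin N)) {K : Fin N × Fin N → ℝ → ℝ → ℝ}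
    (hK : ∀ e, Kn (K e)) : Measurable (fun x : Fin N → ℝ => ∏ e ∈ E, K e (x e.1) (x e.2)) ∧
      ∃ C : ℝ, ∀ x : Fin N → ℝ, |∏ e ∈ E, K e (x e.1) (x e.2)| ≤ C := by
  refine ⟨Finset.measurable_prod E fun e _ => (hK e).meas (by fun_prop) (by fun_prop), ?_⟩
  choose C hC using fun e => (hK e).2
  refine ⟨∏ e ∈ E, C e, fun x => ?_⟩
  rw [Finset.abs_prod]
  exact Finset.prod_le_prod (fun _ _ => abs_nonneg _) fun e _ => hC e _ _

lemma prod_integrable {N : ℕ} (E : Finset (Fin N × Fin N)) {K : Fin N × Fin N → ℝ → ℝ → ℝ}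
    (hK : ∀ e, Kn (K e)) :
    Integrable (fun x : Fin N → ℝ => ∏ e ∈ E, K e (x e.1) (x e.2)) (piI N) := by
  obtain ⟨h1, C, hC⟩ := prod_bdd_meas E hK
  exact Integrable.of_bound h1.aestronglyMeasurable C (Filter.Eventually.of_forall hC)

/-- Directed edge sets without loops and antiparallel edges. -/
def Anti {N : ℕ} (E : Finset (Fin N × Fin N)) : Prop := ∀ i j, (i, j) ∈ E → (j, i) ∉ E

lemma Anti.ne {N : ℕ} {E : Finset (Fin N × Fin N)} (hE : Anti E) {i j : Fin N}
    (h : (i, j) ∈ E) : i ≠ j := by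
  rintro rfl
  exact hE _ _ h h

/-- Symmetric bounded measurable kernels. -/
def SK (V : ℝ → ℝ → ℝ) : Prop := Kn V ∧ ∀ x y, V x y = V y x

/-- The subdivided edge set. -/
def subE {N : ℕ} (E : Finset (Fin N × Fin N)) (i j : Fin N) :
    Finset (Fin (N + 1) × Fin (N + 1)) :=
  insert (i.succ, 0) (insert (0, j.succ)
    ((E.erase (i, j)).image (Prod.map Fin.succ Fin.succ)))

/-- Extending an edge labelling to the subdivided edge set. -/
def subK {N : ℕ} {α : Type*} (K : Fin N × Fin N → α) (A B : α) :
    Fin (N + 1) × Fin (N + 1) → α :=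
  fun e => Fin.cases B (fun a => Fin.cases A (fun b => K (a, b)) e.2) e.1

@[simp] lemma subK_A {N : ℕ} {α : Type*} (K : Fin N × Fin N → α) (A B : α) (i : Fin N) :
    subK K A B (i.succ, 0) = A := rfl
@[simp] lemma subK_B {N : ℕ} {α : Type*} (K : Fin N × Fin N → α) (A B : α) (b : Fin (N + 1)) :
    subK K A B (0, b) = B := rfl
@[simp] lemma subK_K {N : ℕ} {α : Type*} (K : Fin N × Fin N → α) (A B : α) (i j : Fin N) :
    subK K A B (i.succ, j.succ) = K (i, j) := rfl

lemma subE_anti {N : ℕ} {E : Finset (Fin N × Fin N)} (hE : Anti E) {i j : Fin N}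
    (hij : (i, j) ∈ E) : Anti (subE E i j) := by
  have hne := hE.ne hij
  intro a b
  refine Fin.cases ?_ (fun a => ?_) a <;> refine Fin.cases ?_ (fun b => ?_) b <;>
    simp [subE, Fin.succ_ne_zero, (Fin.succ_ne_zero _).symm]
  · rintro rfl h
    exact hne h.symm
  · rintro rfl 
    exact hne
  · intro h1 h2 h3
    have := hE _ _ h2
    tauto

lemma subE_prod {N : ℕ} {E : Finset (Fin N × Fin N)} {i j : Fin N} {M : Type*} [CommMonoid M]
    (f : Fin (N + 1) × Fin (N + 1) → M) : ∏ e ∈ subE E i j, f e =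
      f (i.succ, 0) * (f (0, j.succ) * ∏ e ∈ E.erase (i, j), f (e.1.succ, e.2.succ)) := by
  unfold subE
  rw [Finset.prod_insert, Finset.prod_insert, Finset.prod_image]
  · rfl
  · exact (Function.Injective.prodMap (Fin.succ_injective _) (Fin.succ_injective _)).injOn
  · simp [Fin.succ_ne_zero]
  · simp [Fin.succ_ne_zero]

lemma DD_sub {N : ℕ} {E : Finset (Fin N × Fin N)} {i j : Fin N} (hij : (i, j) ∈ E)
    {K : Fin N × Fin N → ℝ → ℝ → ℝ} (hK : ∀ e, Kn (K e)) {A B : ℝ → ℝ → ℝ} (hA : Kn A)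
    (hB : Kn B) (h : K (i, j) = kerMul A B) :
    DD E K = DD (subE E i j) (subK K A B) := by
  have hK' : ∀ e, Kn (subK K A B e) := by
    rintro ⟨a, b⟩
    refine Fin.cases ?_ (fun a => ?_) a
    · simpa using hB
    · refine Fin.cases ?_ (fun b => ?_) b
      · simpa using hA
      · simpa using hK _
  have hIntA := prod_integrable (subE E i j) hK'
  have mp := measurePreserving_piFinSuccAbove (fun _ : Fin (N + 1) => muI) 0
  unfold DD piI
  unfold piI at hIntA
  rw [← mp.symm.integral_comp' (g := fun x : Fin (N + 1) → ℝ => ∏ e ∈ subE E i j,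
    subK K A B e (x e.1) (x e.2))]
  have hIntB := (mp.symm.integrable_comp_emb (MeasurableEquiv.measurableEmbedding _)).2 hIntA
  refine Eq.trans ?_ (integral_prod_symm _ hIntB).symm
  refine integral_congr_ae (Filter.Eventually.of_forall fun x => ?_)
  simp only [Function.comp_apply, subE_prod]
  rw [← Finset.mul_prod_erase E _ hij, h, kerMul_eq, ← integral_mul_const]
  refine integral_congr_ae (Filter.Eventually.of_forall fun z => ?_)
  simp [MeasurableEquiv.piFinSuccAbove, mul_assoc]

/-- Functionals determined by finitely many homomorphism densities. -/
def FD (Φ : (ℝ → ℝ → ℝ) → ℝ) : Prop :=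
  ∃ L : List (Σ n : ℕ, SimpleGraph (Fin n)), ∀ U W, SK U → SK W →
    (∀ G ∈ L, homDensity G.2 U = homDensity G.2 W) → Φ U = Φ W

lemma FD.congr {Φ Ψ : (ℝ → ℝ → ℝ) → ℝ} (h : FD Φ) (e : ∀ V, SK V → Ψ V = Φ V) : FD Ψ := by
  obtain ⟨L, hL⟩ := h
  exact ⟨L, fun U W hU hW hh => by rw [e U hU, e W hW]; exact hL U W hU hW hh⟩

lemma FD.sum {ι : Type*} (s : Finset ι) {Φ : ι → (ℝ → ℝ → ℝ) → ℝ} (h : ∀ i, FD (Φ i))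
    (c : ι → ℝ) : FD (fun V => ∑ i ∈ s, c i * Φ i V) := by
  choose L hL using h
  refine ⟨s.toList.flatMap L, fun U W hU hW hh => Finset.sum_congr rfl fun i hi => ?_⟩
  rw [hL i U W hU hW fun G hG => hh G ?_]
  exact List.mem_flatMap.2 ⟨i, by simpa using hi, hG⟩

lemma DD_base {N : ℕ} {E : Finset (Fin N × Fin N)} (hE : Anti E) :
    ∃ G : SimpleGraph (Fin N), ∀ V, SK V → DD E (fun _ => V) = homDensity G V := by
  refine ⟨{ Adj := fun a b => (a, b) ∈ E ∨ (b, a) ∈ E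
            symm := ⟨fun a b h => h.symm⟩
            loopless := ⟨fun a h => ?_⟩ }, fun V hV => ?_⟩
  · rcases h with h | h <;> exact hE _ _ h h
  · unfold DD homDensity
    rw [restrict_cube]
    refine integral_congr_ae (Filter.Eventually.of_forall fun x => ?_)
    simp only
    refine Finset.prod_bij' (fun e _ => if e.1 < e.2 then e else e.swap)
      (fun e _ => if e ∈ E then e else e.swap) ?_ ?_ ?_ ?_ ?_
    · rintro ⟨a, b⟩ h
      have := hE.ne h
      by_cases hab : a < b
      · simp [hab, h]
      · simp [hab, h]
        omega
    · rintro ⟨a, b⟩ h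
      simp at h
      by_cases hab : (a, b) ∈ E
      · simp [hab]
      · simpa [hab] using h.2
    · rintro ⟨a, b⟩ h
      by_cases hab : a < b
      · simp [hab, h]
      · simp [hab, hE _ _ h]
    · rintro ⟨a, b⟩ h
      simp at h
      by_cases hab : (a, b) ∈ E
      · simp [hab, h]
      · simp [hab, h.1.le]
    · rintro ⟨a, b⟩ h
      by_cases hab : a < b
      · simp [hab]
      · simp [hab, hV.2 (x a)]

lemma FD_pow (m : ℕ) : ∀ {N : ℕ} {E : Finset (Fin N × Fin N)} (_ : Anti E)
    (l : Fin N × Fin N → ℕ) (_ : ∑ e ∈ E, l e = m),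
    FD (fun V => DD E (fun e => kerPow V (l e))) := by
  induction m with
  | zero =>
    intro N E hE l hl
    obtain ⟨G, hG⟩ := DD_base hE
    refine ⟨[⟨N, G⟩], fun U W hU hW h => ?_⟩
    have key : ∀ V, SK V → DD E (fun e => kerPow V (l e)) = homDensity G V := by
      intro V hV
      rw [← hG V hV]
      unfold DD
      congr 1
      ext x
      refine Finset.prod_congr rfl fun e he => ?_
      simp only [(Finset.sum_eq_zero_iff.1 hl) e he]
      rfl
    simp only [key U hU, key W hW]
    exact h ⟨N, G⟩ (by simp)
  | succ m ih =>
    intro N E hE l hl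
    obtain ⟨⟨i, j⟩, hij, hk⟩ : ∃ e ∈ E, l e ≠ 0 := by
      by_contra! hcon
      rw [Finset.sum_eq_zero hcon] at hl
      omega
    obtain ⟨k, hk⟩ := Nat.exists_eq_succ_of_ne_zero hk
    refine (ih (subE_anti hE hij) (subK l k 0) ?_).congr fun V hV => ?_
    · have := subE_prod (E := E) (i := i) (j := j) (M := Multiplicative ℕ)
        (fun e => Multiplicative.ofAdd (subK l k 0 e))
      simp only [subK_A, subK_B, subK_K, ← ofAdd_sum, ← ofAdd_add] at this
      have := Multiplicative.ofAdd.injective this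
      rw [this]
      rw [← Finset.add_sum_erase E _ hij] at hl
      simp only [Prod.mk.eta]
      omega
    · rw [DD_sub hij (fun e => hV.1.pow (l e)) (hV.1.pow k) hV.1 (by rw [hk]; rfl)]
      congr 1
      ext ⟨a, b⟩ : 1
      refine Fin.cases ?_ (fun a => ?_) a
      · simp [kerPow]
      · refine Fin.cases ?_ (fun b => ?_) b
        · simp
        · simp

/-- kernel polynomial with `c i` the coefficient of `z^{i+1}`, `i ∈ range m`. -/
def kp (m : ℕ) (c : ℕ → ℝ) (V : ℝ → ℝ → ℝ) : ℝ → ℝ → ℝ :=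
  fun x y => ∑ i ∈ Finset.range m, c i * kerPow V i x y

lemma Kn.kp {A : ℝ → ℝ → ℝ} (hA : Kn A) (m : ℕ) (c : ℕ → ℝ) : Kn (kp m c A) :=
  Kn.sum _ _ fun i => hA.pow i

lemma FD_kp {N : ℕ} {E : Finset (Fin N × Fin N)} (hE : Anti E)
    (m : Fin N × Fin N → ℕ) (c : Fin N × Fin N → ℕ → ℝ) :
    FD (fun V => DD E (fun e => kp (m e) (c e) V)) := by
  let ext : ((e : Fin N × Fin N) → e ∈ E → ℕ) → Fin N × Fin N → ℕ :=
    fun p e => if h : e ∈ E then p e h else 0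
  refine FD.congr (Φ := fun V => ∑ p ∈ E.pi (fun e => Finset.range (m e)),
    (∏ e ∈ E, c e (ext p e)) * DD E (fun e => kerPow V (ext p e)))
    (FD.sum _ (fun p => FD_pow _ hE (ext p) rfl) _) fun V hV => ?_
  unfold DD kp
  simp_rw [Finset.prod_sum, ← integral_const_mul]
  rw [← integral_finsetSum]
  · congr 1
    ext x
    refine Finset.sum_congr rfl fun p _ => ?_
    rw [← Finset.prod_mul_distrib, ← Finset.prod_attach E]
    refine Finset.prod_congr rfl fun e _ => ?_
    simp [ext]
  · intro p _
    exact (prod_integrable E fun e => hV.1.pow _).const_mul _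

lemma homDensity_eq_DD {N : ℕ} (G : SimpleGraph (Fin N)) (V : ℝ → ℝ → ℝ) :
    homDensity G V =
      DD (Finset.univ.filter (fun p : Fin N × Fin N => p.1 < p.2 ∧ G.Adj p.1 p.2))
        (fun _ => V) := by
  unfold DD homDensity
  rw [restrict_cube]

lemma anti_graph {N : ℕ} (G : SimpleGraph (Fin N)) :
    Anti (Finset.univ.filter (fun p : Fin N × Fin N => p.1 < p.2 ∧ G.Adj p.1 p.2)) := by
  intro i j h h'
  simp at h h'
  omega

/-- `L¹` norm of a kernel. -/
def L1 (A : ℝ → ℝ → ℝ) : ℝ := ∫ x, ∫ y, |A x y| ∂muI ∂muI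

lemma L1_nonneg (A : ℝ → ℝ → ℝ) : 0 ≤ L1 A :=
  integral_nonneg fun _ => integral_nonneg fun _ => abs_nonneg _

lemma Kn.integrable_prod {A : ℝ → ℝ → ℝ} (hA : Kn A) :
    Integrable (fun q : ℝ × ℝ => A q.1 q.2) (muI.prod muI) := by
  obtain ⟨C, hC⟩ := hA.2
  exact Integrable.of_bound (hA.meas measurable_fst measurable_snd).aestronglyMeasurable C
    (Filter.Eventually.of_forall fun q => hC _ _)

lemma map_pair {N : ℕ} {i j : Fin N} (hij : i ≠ j) :
    (piI N).map (fun x => (x i, x j)) = muI.prod muI := by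
  have h := ProbabilityTheory.iIndepFun_pi (μ := fun _ : Fin N => muI)
    (X := fun _ => (id : ℝ → ℝ)) (fun _ => aemeasurable_id)
  have h2 := (h.indepFun hij).map_prod_eq_prod_map_map (measurable_pi_apply i).aemeasurable
    (measurable_pi_apply j).aemeasurable
  have h3 : ∀ k : Fin N, Measure.map (fun x : Fin N → ℝ => x k) (Measure.pi fun _ => muI) = muI :=
    fun k => (measurePreserving_eval (fun _ : Fin N => muI) k).map_eq
  change Measure.map (fun x : Fin N → ℝ => (x i, x j)) (Measure.pi fun _ => muI) =
    (Measure.map (fun x : Fin N → ℝ => x i) (Measure.pi fun _ => muI)).prod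
      (Measure.map (fun x : Fin N → ℝ => x j) (Measure.pi fun _ => muI)) at h2
  rw [h3, h3] at h2
  exact h2

lemma integral_pairI {N : ℕ} {i j : Fin N} (hij : i ≠ j) {A : ℝ → ℝ → ℝ} (hA : Kn A) :
    ∫ x, |A (x i) (x j)| ∂(piI N) = L1 A := by
  unfold L1
  rw [← integral_prod (fun q : ℝ × ℝ => |A q.1 q.2|) hA.integrable_prod.abs, ← map_pair hij,
    integral_map]
  · fun_prop
  · exact (hA.meas measurable_fst measurable_snd).abs.aestronglyMeasurable

lemma Kn_update {N : ℕ} {K : Fin N × Fin N → ℝ → ℝ → ℝ} (hK : ∀ e, Kn (K e))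
    (e0 : Fin N × Fin N) {A : ℝ → ℝ → ℝ} (hA : Kn A) (e : Fin N × Fin N) :
    Kn (Function.update K e0 A e) := by
  by_cases h : e = e0
  · subst h; simpa using hA
  · simpa [h] using hK e

lemma DD_pert {N : ℕ} {E : Finset (Fin N × Fin N)} (hE : Anti E) {e0 : Fin N × Fin N}
    (he : e0 ∈ E) {K : Fin N × Fin N → ℝ → ℝ → ℝ} (hK : ∀ e, Kn (K e)) :
    ∃ C : ℝ, 0 ≤ C ∧ ∀ A B, Kn A → Kn B → |DD E (Function.update K e0 A) -
      DD E (Function.update K e0 B)| ≤ C * L1 (fun x y => A x y - B x y) := by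
  obtain ⟨i, j⟩ := e0
  obtain ⟨-, C, hC⟩ := prod_bdd_meas (E.erase (i, j)) hK
  refine ⟨C, (abs_nonneg _).trans (hC 0), fun A B hA hB => ?_⟩
  have key : ∀ A : ℝ → ℝ → ℝ, ∀ x : Fin N → ℝ,
      ∏ e ∈ E, Function.update K (i, j) A e (x e.1) (x e.2) =
        A (x i) (x j) * ∏ e ∈ E.erase (i, j), K e (x e.1) (x e.2) := by
    intro A x
    rw [← Finset.mul_prod_erase E _ he]
    simp only [Function.update_self]
    congr 1
    refine Finset.prod_congr rfl fun e he' => ?_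
    rw [Function.update_of_ne (Finset.ne_of_mem_erase he')]
  unfold DD
  rw [← integral_sub (prod_integrable E (Kn_update hK _ hA))
    (prod_integrable E (Kn_update hK _ hB)), ← integral_pairI (hE.ne he) (hA.sub hB),
    ← integral_const_mul]
  refine (abs_integral_le_integral_abs).trans ?_
  have hi : Integrable (fun x : Fin N → ℝ => |A (x i) (x j) - B (x i) (x j)|) (piI N) := by
    obtain ⟨C', hC'⟩ := (hA.sub hB).2
    exact Integrable.of_bound ((hA.sub hB).meas (measurable_pi_apply i)
      (measurable_pi_apply j)).abs.aestronglyMeasurable C'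
      (Filter.Eventually.of_forall fun x => by simpa using hC' (x i) (x j))
  refine integral_mono_of_nonneg (Filter.Eventually.of_forall fun _ => abs_nonneg _)
    (hi.const_mul C) (Filter.Eventually.of_forall fun x => ?_)
  simp only [key]
  rw [← sub_mul, abs_mul, mul_comm]
  exact mul_le_mul_of_nonneg_right (hC x) (abs_nonneg _)

lemma iter_limit {N : ℕ} {E : Finset (Fin N × Fin N)} (hE : Anti E) {U W : ℝ → ℝ → ℝ}
    (hU : Kn U) (hW : Kn W) {ι : Type*} {Q R : ι → ℝ → ℝ → ℝ} (hQ : ∀ r, Kn (Q r))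
    (hR : ∀ r, Kn (R r))
    (happ : ∀ ε > 0, ∃ r, L1 (fun x y => U x y - Q r x y) ≤ ε ∧
      L1 (fun x y => W x y - R r x y) ≤ ε)
    (heq : ∀ r : Fin N × Fin N → ι, DD E (fun e => Q (r e)) = DD E (fun e => R (r e))) :
    DD E (fun _ => U) = DD E (fun _ => W) := by
  have main : ∀ S : Finset (Fin N × Fin N), S ⊆ E → ∀ r : Fin N × Fin N → ι,
      DD E (fun e => if e ∈ S then U else Q (r e)) =
        DD E (fun e => if e ∈ S then W else R (r e)) := by
    intro S
    induction S using Finset.induction_on with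
    | empty => intro _ r; simpa using heq r
    | insert e0 S hnot ih =>
      intro hS r
      have ih := ih (fun e he => hS (Finset.mem_insert_of_mem he))
      have he0 : e0 ∈ E := hS (Finset.mem_insert_self _ _)
      have h1 : ∀ (U : ℝ → ℝ → ℝ) (Q : ι → ℝ → ℝ → ℝ),
          (fun e => if e ∈ insert e0 S then U else Q (r e)) =
          Function.update (fun e => if e ∈ S then U else Q (r e)) e0 U := by
        intro U Q
        ext e : 1
        by_cases h : e = e0
        · subst h; simp
        · simp [h]
      have h2 : ∀ (U : ℝ → ℝ → ℝ) (Q : ι → ℝ → ℝ → ℝ) (r' : ι),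
          (fun e => if e ∈ S then U else Q (Function.update r e0 r' e)) =
          Function.update (fun e => if e ∈ S then U else Q (r e)) e0 (Q r') := by
        intro U Q r'
        ext e : 1
        by_cases h : e = e0
        · subst h; simp [hnot]
        · simp [h]
      obtain ⟨C, hC0, hC⟩ := DD_pert hE he0 (K := fun e => if e ∈ S then U else Q (r e))
        (fun e => by split_ifs; exacts [hU, hQ _])
      obtain ⟨C', hC0', hC'⟩ := DD_pert hE he0 (K := fun e => if e ∈ S then W else R (r e))
        (fun e => by split_ifs; exacts [hW, hR _])
      rw [h1, h1]
      refine eq_of_abs_sub_le_all fun ε hε => ?_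
      obtain ⟨r', hr1, hr2⟩ := happ (ε / (C + C' + 1)) (by positivity)
      have e1 := (hC U (Q r') hU (hQ r')).trans (mul_le_mul_of_nonneg_left hr1 hC0)
      have e2 := (hC' W (R r') hW (hR r')).trans (mul_le_mul_of_nonneg_left hr2 hC0')
      have e3 := ih (Function.update r e0 r')
      rw [h2, h2] at e3
      rw [e3] at e1
      have e4 : C * (ε / (C + C' + 1)) + C' * (ε / (C + C' + 1)) ≤ ε := by
        rw [← add_mul, mul_div_assoc', div_le_iff₀ (by positivity)]
        nlinarith
      rw [abs_le] at *
      constructor <;> linarith [e1.1, e1.2, e2.1, e2.2]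
  by_cases hι : Nonempty ι
  · have := main E subset_rfl (fun _ => Classical.choice hι)
    unfold DD at this ⊢
    convert this using 3 with x x
    · exact Finset.prod_congr rfl fun e he => by simp [he]
    · exact Finset.prod_congr rfl fun e he => by simp [he]
  · obtain ⟨r, -⟩ := happ 1 one_pos
    exact absurd ⟨r⟩ hι

open Polynomial in
lemma approx_poly (S : ℝ[X]) (hinj : Function.Injective fun t : ℝ => t * S.eval t) {M : ℝ}
    (hM : 0 < M) {ε : ℝ} (hε : 0 < ε) :
    ∃ R : ℝ[X], ∀ t : ℝ, |t| ≤ M → |(S * R.comp (X * S) - 1).eval t| ≤ 2 ∧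
      |t * (S * R.comp (X * S) - 1).eval t| ≤ ε := by
  have hcont : Continuous fun t : ℝ => S.eval t := S.continuous
  obtain ⟨B, hB⟩ := (isCompact_Icc (a := -M) (b := M)).exists_bound_of_continuousOn
    hcont.continuousOn
  have hS0 : ∀ t : ℝ, t ≠ 0 → S.eval t ≠ 0 := by
    intro t ht h0
    exact ht (hinj (by simp [h0]))
  have hcomp : IsCompact (Set.Icc (-M) M ∩ {t : ℝ | ε / 2 ≤ |t|}) :=
    isCompact_Icc.inter_right (isClosed_le continuous_const continuous_abs)
  obtain ⟨c, hc0, hc⟩ := hcomp.exists_forall_le' (f := fun t => S.eval t ^ 2) (a := 0)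
    (hcont.pow 2).continuousOn (by
      rintro t ⟨-, ht⟩
      have ht : ε / 2 ≤ |t| := ht
      have : t ≠ 0 := abs_pos.1 (by linarith)
      have := hS0 t this
      positivity)
  obtain ⟨δ, hδ0, hδ1, hδ2, hδ3⟩ : ∃ δ : ℝ, 0 < δ ∧ δ ≤ 1 ∧ M * δ ≤ ε / 2 * c ∧
      M * δ ≤ ε / 2 := by
    refine ⟨min 1 (min (ε / 2 * c / M) (ε / 2 / M)), by positivity, min_le_left _ _, ?_, ?_⟩
    · rw [← le_div_iff₀' hM]
      exact (min_le_right _ _).trans (min_le_left _ _)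
    · rw [← le_div_iff₀' hM]
      exact (min_le_right _ _).trans (min_le_right _ _)
  have hB0 : 0 ≤ B := (norm_nonneg _).trans (hB 0 ⟨by linarith, hM.le⟩)
  let pK : C(Set.Icc (-M) M, ℝ) := ⟨fun t => (t : ℝ) * S.eval (t : ℝ), by fun_prop⟩
  obtain ⟨⟨g, hg⟩, hgapp⟩ :=
    ContinuousMap.exists_mem_subalgebra_near_continuous_of_separatesPoints
    (Algebra.adjoin ℝ {pK}) (by
      intro x y hxy
      refine ⟨pK, ⟨pK, Algebra.subset_adjoin rfl, rfl⟩, fun h => hxy (Subtype.ext (hinj h))⟩)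
    (fun t : Set.Icc (-M) M => S.eval (t : ℝ) / (S.eval (t : ℝ) ^ 2 + δ))
    (by
      refine Continuous.div (by fun_prop) (by fun_prop) fun t => ?_
      positivity) (δ / (B + 1)) (by positivity)
  rw [Algebra.adjoin_singleton_eq_range_aeval] at hg
  obtain ⟨R, rfl⟩ := hg
  refine ⟨R, fun t ht => ?_⟩
  have htm : t ∈ Set.Icc (-M) M := abs_le.1 ht
  have happ := (hgapp ⟨t, htm⟩).le
  have hev : (aeval pK R : C(Set.Icc (-M) M, ℝ)) ⟨t, htm⟩ = (R.comp (X * S)).eval t := by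
    have : (aeval pK R : C(Set.Icc (-M) M, ℝ)) ⟨t, htm⟩ = R.eval (pK ⟨t, htm⟩) := by
      simp
    rw [this]
    simp [pK]
  change ‖(aeval pK R : C(Set.Icc (-M) M, ℝ)) ⟨t, htm⟩ -
    S.eval t / (S.eval t ^ 2 + δ)‖ ≤ δ / (B + 1) at happ
  rw [hev] at happ
  have hBt : |S.eval t| ≤ B := hB t htm
  simp only [eval_sub, eval_mul, eval_one, Real.norm_eq_abs] at happ ⊢
  set s := S.eval t with hs
  set r := (R.comp (X * S)).eval t with hr
  have hpos : 0 < s ^ 2 + δ := by positivity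
  have e1 : s * r - 1 = s * (r - s / (s ^ 2 + δ)) - δ / (s ^ 2 + δ) := by
    field_simp
    ring
  have e2 : |s * (r - s / (s ^ 2 + δ))| ≤ δ := by
    rw [abs_mul]
    calc |s| * |r - s / (s ^ 2 + δ)| ≤ B * (δ / (B + 1)) :=
          mul_le_mul hBt happ (abs_nonneg _) hB0
      _ ≤ δ := by
          rw [mul_div_assoc', div_le_iff₀ (by positivity)]
          nlinarith
  have e3 : 0 ≤ δ / (s ^ 2 + δ) := by positivity
  have e4 : δ / (s ^ 2 + δ) ≤ 1 := by
    rw [div_le_one hpos]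
    nlinarith [sq_nonneg s]
  have e5 : |s * r - 1| ≤ δ + δ / (s ^ 2 + δ) := by
    rw [e1]
    refine (abs_sub _ _).trans ?_
    rw [abs_of_nonneg e3]
    linarith
  refine ⟨by linarith, ?_⟩
  rw [abs_mul]
  have e6 : |t| * (δ / (s ^ 2 + δ)) ≤ ε / 2 := by
    by_cases hte : ε / 2 ≤ |t|
    · have hcs : c ≤ s ^ 2 := hc t ⟨htm, hte⟩
      rw [mul_div_assoc', div_le_iff₀ hpos]
      have : |t| * δ ≤ M * δ := mul_le_mul_of_nonneg_right ht hδ0.le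
      nlinarith
    · push Not at hte
      calc |t| * (δ / (s ^ 2 + δ)) ≤ ε / 2 * 1 := mul_le_mul hte.le e4 e3 (by positivity)
        _ = ε / 2 := mul_one _
  calc |t| * |s * r - 1| ≤ |t| * (δ + δ / (s ^ 2 + δ)) :=
        mul_le_mul_of_nonneg_left e5 (abs_nonneg _)
    _ = |t| * δ + |t| * (δ / (s ^ 2 + δ)) := by ring
    _ ≤ ε := by
        have : |t| * δ ≤ M * δ := mul_le_mul_of_nonneg_right ht hδ0.le
        linarith

open Polynomial in
lemma norm_aeval_le {H : Type*} [NormedAddCommGroup H] [InnerProductSpace ℂ H] [CompleteSpace H]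
    {T : H →L[ℂ] H} (hT : IsSelfAdjoint T) {M : ℝ} (hTM : ‖T‖ ≤ M) (q : ℝ[X]) {c : ℝ}
    (hc : 0 ≤ c) (h : ∀ t : ℝ, |t| ≤ M → |q.eval t| ≤ c) : ‖aeval T q‖ ≤ c := by
  rcases subsingleton_or_nontrivial H with hH | hH
  · rw [Subsingleton.elim (aeval T q) 0, norm_zero]
    exact hc
  rw [← cfc_polynomial q T hT]
  refine norm_cfc_le hc fun x hx => h x ?_
  exact (spectrum.norm_le_norm_of_mem hx).trans hTM

/-- The Hilbert space `L²([0,1]; ℂ)`. -/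
abbrev HH : Type := Lp ℂ 2 muI

lemma HH_integrable (f : HH) : Integrable (fun z => f z) muI :=
  (Lp.memLp f).integrable (by norm_num)

lemma HH_l1_le (f : HH) : ∫ z, ‖f z‖ ∂muI ≤ ‖f‖ := by
  rw [integral_norm_eq_lintegral_enorm (Lp.aestronglyMeasurable f), Lp.norm_def,
    ← eLpNorm_one_eq_lintegral_enorm]
  exact ENNReal.toReal_mono (Lp.eLpNorm_ne_top f)
    (eLpNorm_le_eLpNorm_of_exponent_le (by norm_num) (Lp.aestronglyMeasurable f))

lemma HH_norm_le {f : HH} {C : ℝ} (hC : 0 ≤ C) (h : ∀ᵐ y ∂muI, ‖f y‖ ≤ C) : ‖f‖ ≤ C := by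
  have := Lp.norm_le_of_ae_bound hC h
  simpa [measureUnivNNReal] using this

/-- The integral operator on functions. -/
def opFun (A : ℝ → ℝ → ℝ) (f : ℝ → ℂ) (y : ℝ) : ℂ := ∫ z, f z * (A z y : ℂ) ∂muI

lemma Kn.integrable_mul {A : ℝ → ℝ → ℝ} (hA : Kn A) {f : ℝ → ℂ} (hf : Integrable f muI) (y : ℝ) :
    Integrable (fun z => f z * (A z y : ℂ)) muI := by
  obtain ⟨C, hC⟩ := hA.2
  refine hf.mul_bdd (c := C) ?_ (Filter.Eventually.of_forall fun z => ?_)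
  · exact (Complex.measurable_ofReal.comp
      (hA.meas measurable_id measurable_const)).aestronglyMeasurable
  · simpa using hC z y

lemma Kn.exists_bound {A : ℝ → ℝ → ℝ} (hA : Kn A) :
    ∃ C : ℝ, 0 ≤ C ∧ ∀ x y, |A x y| ≤ C := by
  obtain ⟨C, hC⟩ := hA.2
  exact ⟨C, (abs_nonneg _).trans (hC 0 0), hC⟩

lemma opFun_bound {A : ℝ → ℝ → ℝ} {C : ℝ} (hC : ∀ x y, |A x y| ≤ C) (hC0 : 0 ≤ C)
    (f : HH) (y : ℝ) : ‖opFun A f y‖ ≤ C * ‖f‖ := by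
  unfold opFun
  calc ‖∫ z, f z * (A z y : ℂ) ∂muI‖ ≤ ∫ z, C * ‖f z‖ ∂muI := by
        refine norm_integral_le_of_norm_le ((HH_integrable f).norm.const_mul C)
          (Filter.Eventually.of_forall fun z => ?_)
        rw [norm_mul, mul_comm]
        refine mul_le_mul_of_nonneg_right ?_ (norm_nonneg _)
        simpa using hC z y
    _ ≤ C * ‖f‖ := by
        rw [integral_const_mul]
        exact mul_le_mul_of_nonneg_left (HH_l1_le f) hC0

lemma opFun_meas {A : ℝ → ℝ → ℝ} (hA : Kn A) (f : HH) : StronglyMeasurable (opFun A f) := by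
  have h : StronglyMeasurable (fun q : ℝ × ℝ => f q.2 * (A q.2 q.1 : ℂ)) := by
    refine StronglyMeasurable.mul ?_ ?_
    · exact (Lp.stronglyMeasurable f).comp_measurable measurable_snd
    · exact (Complex.measurable_ofReal.comp
        (hA.meas measurable_snd measurable_fst)).stronglyMeasurable
  exact h.integral_prod_right (ν := muI)

lemma opFun_memLp {A : ℝ → ℝ → ℝ} (hA : Kn A) (f : HH) : MemLp (opFun A f) 2 muI := by
  obtain ⟨C, hC0, hC⟩ := hA.exists_bound
  exact MemLp.of_bound (opFun_meas hA f).aestronglyMeasurable _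
    (Filter.Eventually.of_forall (opFun_bound hC hC0 f))

lemma opFun_congr (A : ℝ → ℝ → ℝ) {f g : ℝ → ℂ} (h : f =ᵐ[muI] g) : opFun A f = opFun A g := by
  ext y
  refine integral_congr_ae ?_
  filter_upwards [h] with z hz
  rw [hz]

/-- The integral operator as a linear map. -/
def opLin {A : ℝ → ℝ → ℝ} (hA : Kn A) : HH →ₗ[ℂ] HH where
  toFun f := (opFun_memLp hA f).toLp (opFun A f)
  map_add' f g := by
    rw [← MemLp.toLp_add]
    refine MemLp.toLp_congr _ _ (Filter.Eventually.of_forall fun y => ?_)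
    rw [opFun_congr A (Lp.coeFn_add f g)]
    simp only [opFun, Pi.add_apply, add_mul]
    exact integral_add (hA.integrable_mul (HH_integrable f) y)
      (hA.integrable_mul (HH_integrable g) y)
  map_smul' c f := by
    rw [RingHom.id_apply, ← MemLp.toLp_const_smul]
    refine MemLp.toLp_congr _ _ (Filter.Eventually.of_forall fun y => ?_)
    rw [opFun_congr A (Lp.coeFn_smul c f)]
    simp only [opFun, Pi.smul_apply, smul_eq_mul, mul_assoc]
    exact integral_const_mul _ _

lemma opLin_coe {A : ℝ → ℝ → ℝ} (hA : Kn A) (f : HH) : opLin hA f =ᵐ[muI] opFun A f :=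
  MemLp.coeFn_toLp (opFun_memLp hA f)

lemma opLin_bound {A : ℝ → ℝ → ℝ} (hA : Kn A) {C : ℝ} (hC0 : 0 ≤ C) (hC : ∀ x y, |A x y| ≤ C)
    (f : HH) : ‖opLin hA f‖ ≤ C * ‖f‖ := by
  refine HH_norm_le (by positivity) ?_
  filter_upwards [opLin_coe hA f] with y hy
  rw [hy]
  exact opFun_bound hC hC0 f y

/-- The integral operator. -/
def op {A : ℝ → ℝ → ℝ} (hA : Kn A) : HH →L[ℂ] HH :=
  (opLin hA).mkContinuousOfExistsBound (by
    obtain ⟨C, hC0, hC⟩ := hA.exists_bound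
    exact ⟨C, opLin_bound hA hC0 hC⟩)

lemma op_coe {A : ℝ → ℝ → ℝ} (hA : Kn A) (f : HH) : op hA f =ᵐ[muI] opFun A f :=
  opLin_coe hA f

lemma op_norm_le {A : ℝ → ℝ → ℝ} (hA : Kn A) {C : ℝ} (hC0 : 0 ≤ C) (hC : ∀ x y, |A x y| ≤ C) :
    ‖op hA‖ ≤ C :=
  ContinuousLinearMap.opNorm_le_bound _ hC0 (opLin_bound hA hC0 hC)

lemma row_memLp {A : ℝ → ℝ → ℝ} (hA : Kn A) (x : ℝ) :
    MemLp (fun y => (A x y : ℂ)) 2 muI := by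
  obtain ⟨C, hC0, hC⟩ := hA.exists_bound
  refine MemLp.of_bound ?_ C (Filter.Eventually.of_forall fun y => by simpa using hC x y)
  exact (Complex.measurable_ofReal.comp
    (hA.meas measurable_const measurable_id)).aestronglyMeasurable

/-- The row of a kernel. -/
def row {A : ℝ → ℝ → ℝ} (hA : Kn A) (x : ℝ) : HH := (row_memLp hA x).toLp

lemma row_coe {A : ℝ → ℝ → ℝ} (hA : Kn A) (x : ℝ) : row hA x =ᵐ[muI] fun y => (A x y : ℂ) :=
  MemLp.coeFn_toLp (row_memLp hA x)

lemma row_norm_le {A : ℝ → ℝ → ℝ} (hA : Kn A) {C : ℝ} (hC0 : 0 ≤ C) (hC : ∀ x y, |A x y| ≤ C)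
    (x : ℝ) : ‖row hA x‖ ≤ C := by
  refine HH_norm_le hC0 ?_
  filter_upwards [row_coe hA x] with y hy
  rw [hy]
  simpa using hC x y

lemma op_row {A B : ℝ → ℝ → ℝ} (hA : Kn A) (hB : Kn B) (x : ℝ) :
    op hA (row hB x) = row (hB.mul hA) x := by
  refine Lp.ext ?_
  filter_upwards [op_coe hA (row hB x), row_coe (hB.mul hA) x] with y h1 h2
  rw [h1, h2, opFun_congr A (row_coe hB x), kerMul_eq, ← integral_complex_ofReal]
  simp [opFun]

lemma Kn.integrable_swap {A : ℝ → ℝ → ℝ} (hA : Kn A) {f g : ℝ → ℂ} (hf : Integrable f muI)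
    (hg : Integrable g muI) :
    Integrable (fun q : ℝ × ℝ => f q.1 * g q.2 * (A q.1 q.2 : ℂ)) (muI.prod muI) := by
  obtain ⟨C, hC⟩ := hA.2
  refine (hf.mul_prod hg).mul_bdd (c := C) ?_ (Filter.Eventually.of_forall fun z => ?_)
  · exact (Complex.measurable_ofReal.comp
      (hA.meas measurable_fst measurable_snd)).aestronglyMeasurable
  · simpa using hC _ _

lemma op_mul {A B : ℝ → ℝ → ℝ} (hA : Kn A) (hB : Kn B) :
    op (hB.mul hA) = op hA * op hB := by
  ext1 f
  refine Lp.ext ?_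
  rw [mul_apply_eq_comp]
  filter_upwards [op_coe hA (op hB f), op_coe (hB.mul hA) f] with y h1 h2
  rw [h1, h2, opFun_congr A (op_coe hB f)]
  simp only [opFun, kerMul_eq]
  simp_rw [← integral_complex_ofReal, ← integral_const_mul, ← integral_mul_const]
  have hAy : Integrable (fun w => (A w y : ℂ)) muI := by
    simpa using hA.integrable_mul (integrable_const (1 : ℂ)) y
  rw [integral_integral_swap]
  · refine integral_congr_ae (Filter.Eventually.of_forall fun w => ?_)
    refine integral_congr_ae (Filter.Eventually.of_forall fun z => ?_)
    simp
    ring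
  · refine (hB.integrable_swap (HH_integrable f) hAy).congr
      (Filter.Eventually.of_forall fun q => ?_)
    simp [Function.uncurry]
    ring

lemma op_selfAdjoint {A : ℝ → ℝ → ℝ} (hA : SK A) : IsSelfAdjoint (op hA.1) := by
  rw [ContinuousLinearMap.isSelfAdjoint_iff_isSymmetric]
  intro f g
  change inner ℂ (op hA.1 f) g = inner ℂ f (op hA.1 g)
  rw [L2.inner_def, L2.inner_def]
  have e1 : ∫ y, inner ℂ ((op hA.1 f) y) (g y) ∂muI =
      ∫ y, ∫ z, (starRingEnd ℂ) (f z) * g y * (A z y : ℂ) ∂muI ∂muI := by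
    refine integral_congr_ae ?_
    filter_upwards [op_coe hA.1 f] with y hy
    rw [hy]
    simp only [opFun, RCLike.inner_apply]
    rw [← integral_conj, ← integral_const_mul]
    refine integral_congr_ae (Filter.Eventually.of_forall fun z => ?_)
    simp
    ring
  have e2 : ∫ z, inner ℂ (f z) ((op hA.1 g) z) ∂muI =
      ∫ z, ∫ y, (starRingEnd ℂ) (f z) * g y * (A z y : ℂ) ∂muI ∂muI := by
    refine integral_congr_ae ?_
    filter_upwards [op_coe hA.1 g] with z hz
    rw [hz]
    simp only [opFun, RCLike.inner_apply]
    rw [← integral_mul_const]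
    refine integral_congr_ae (Filter.Eventually.of_forall fun y => ?_)
    simp only [hA.2 y z]
    ring
  rw [e1, e2]
  have hf : Integrable (fun z => (starRingEnd ℂ) (f z)) muI :=
    (Complex.conjCLE : ℂ →L[ℝ] ℂ).integrable_comp (HH_integrable f)
  exact integral_integral_swap ((hA.1.integrable_swap hf (HH_integrable g)).swap)

lemma row_sum {ι : Type*} (s : Finset ι) (c : ι → ℝ) {A : ι → ℝ → ℝ → ℝ}
    (hA : ∀ i, Kn (A i)) (x : ℝ) :
    row (Kn.sum s c hA) x = ∑ i ∈ s, c i • row (hA i) x := by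
  refine Lp.ext ?_
  have h : ∀ i ∈ s, (c i • row (hA i) x : HH) =ᵐ[muI] fun y => (c i : ℂ) * (A i x y : ℂ) := by
    intro i _
    filter_upwards [Lp.coeFn_smul (c i) (row (hA i) x), row_coe (hA i) x] with y h1 h2
    rw [h1, Pi.smul_apply, h2, Complex.real_smul]
  have h' := (Finset.eventually_all s).2 h
  filter_upwards [row_coe (Kn.sum s c hA) x, Lp.coeFn_finsetSum s (fun i => c i • row (hA i) x),
    h'] with y h1 h2 h3
  rw [h1, h2, Finset.sum_apply, Finset.sum_congr rfl h3]
  push_cast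
  rfl

lemma op_sum {ι : Type*} (s : Finset ι) (c : ι → ℝ) {A : ι → ℝ → ℝ → ℝ}
    (hA : ∀ i, Kn (A i)) :
    op (Kn.sum s c hA) = ∑ i ∈ s, c i • op (hA i) := by
  ext1 f
  rw [sum_apply]
  refine Lp.ext ?_
  have h : ∀ i ∈ s, ((c i • op (hA i)) f : HH) =ᵐ[muI] fun y => (c i : ℂ) * opFun (A i) f y := by
    intro i _
    filter_upwards [Lp.coeFn_smul (c i) (op (hA i) f), op_coe (hA i) f] with y h1 h2
    rw [smul_apply, h1, Pi.smul_apply, h2, Complex.real_smul]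
  have h' := (Finset.eventually_all s).2 h
  filter_upwards [op_coe (Kn.sum s c hA) f, Lp.coeFn_finsetSum s (fun i => (c i • op (hA i)) f),
    h'] with y h1 h2 h3
  rw [h1, h2, Finset.sum_apply, Finset.sum_congr rfl h3]
  simp only [opFun]
  simp_rw [← integral_const_mul]
  rw [← integral_finsetSum]
  · refine integral_congr_ae (Filter.Eventually.of_forall fun z => ?_)
    simp only
    push_cast
    rw [Finset.mul_sum]
    exact Finset.sum_congr rfl fun i _ => by ring
  · intro i _
    exact ((hA i).integrable_mul (HH_integrable f) y).const_mul _

lemma op_pow {A : ℝ → ℝ → ℝ} (hA : Kn A) (k : ℕ) : op (hA.pow k) = op hA ^ (k + 1) := by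
  induction k with
  | zero => simp; rfl
  | succ k ih =>
    rw [pow_succ', ← ih]
    exact op_mul hA (hA.pow k)

lemma row_pow {A : ℝ → ℝ → ℝ} (hA : Kn A) (k : ℕ) (x : ℝ) :
    row (hA.pow k) x = (op hA ^ k) (row hA x) := by
  induction k with
  | zero => simp; rfl
  | succ k ih =>
    rw [pow_succ', mul_apply_eq_comp, ← ih, op_row]
    rfl

lemma Kn.kerPoly {A : ℝ → ℝ → ℝ} (hA : Kn A) (n : ℕ) (a : Fin n → ℝ) : Kn (kerPoly n a A) :=
  Kn.sum Finset.univ a fun i : Fin n => hA.pow i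

/-- The polynomial `p(z)/z`. -/
def polS (n : ℕ) (a : Fin n → ℝ) : Polynomial ℝ :=
  ∑ i, Polynomial.C (a i) * Polynomial.X ^ (i : ℕ)

lemma row_kerPoly {A : ℝ → ℝ → ℝ} (hA : Kn A) (n : ℕ) (a : Fin n → ℝ) (x : ℝ) :
    row (hA.kerPoly n a) x = Polynomial.aeval (op hA) (polS n a) (row hA x) := by
  refine (row_sum Finset.univ a (fun i : Fin n => hA.pow i) x).trans ?_
  simp only [polS, map_sum, map_mul, Polynomial.aeval_C, map_pow, Polynomial.aeval_X,
    sum_apply, ← Algebra.smul_def]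
  exact Finset.sum_congr rfl fun i _ => congrArg (fun v => a i • v) (row_pow hA i x)

lemma op_kerPoly {A : ℝ → ℝ → ℝ} (hA : Kn A) (n : ℕ) (a : Fin n → ℝ) :
    op (hA.kerPoly n a) = Polynomial.aeval (op hA) (Polynomial.X * polS n a) := by
  refine (op_sum Finset.univ a (fun i : Fin n => hA.pow i)).trans ?_
  simp only [polS, map_sum, map_mul, Polynomial.aeval_C, map_pow, Polynomial.aeval_X,
    ← Algebra.smul_def, Finset.mul_sum, mul_smul_comm]
  exact Finset.sum_congr rfl fun i _ =>
    congrArg (fun T => a i • T) ((op_pow hA i).trans (pow_succ' _ _))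

/-- Kernel polynomial from a polynomial `R`, representing `V R(V)`. -/
def kq (R : Polynomial ℝ) (V : ℝ → ℝ → ℝ) : ℝ → ℝ → ℝ := kp (R.natDegree + 1) R.coeff V

lemma Kn.kq {A : ℝ → ℝ → ℝ} (hA : Kn A) (R : Polynomial ℝ) : Kn (kq R A) := hA.kp _ _

lemma row_kq {A : ℝ → ℝ → ℝ} (hA : Kn A) (R : Polynomial ℝ) (x : ℝ) :
    row (hA.kq R) x = Polynomial.aeval (op hA) R (row hA x) := by
  refine (row_sum (Finset.range (R.natDegree + 1)) R.coeff (fun i => hA.pow i) x).trans ?_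
  rw [Polynomial.aeval_eq_sum_range, sum_apply]
  exact Finset.sum_congr rfl fun i _ => congrArg (fun v => R.coeff i • v) (row_pow hA i x)

lemma row_kq_kerPoly {A : ℝ → ℝ → ℝ} (hA : Kn A) (n : ℕ) (a : Fin n → ℝ) (R : Polynomial ℝ)
    (x : ℝ) : row ((hA.kerPoly n a).kq R) x - row hA x =
      Polynomial.aeval (op hA)
        (polS n a * R.comp (Polynomial.X * polS n a) - 1) (row hA x) := by
  rw [row_kq (hA.kerPoly n a), row_kerPoly hA, op_kerPoly hA, ← Polynomial.aeval_comp,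
    mul_comm (polS n a) (R.comp _), map_sub, map_mul, map_one]
  rfl

lemma l1_row_le {A B : ℝ → ℝ → ℝ} (hA : Kn A) (hB : Kn B) (x : ℝ) :
    ∫ y, |A x y - B x y| ∂muI ≤ ‖row hB x - row hA x‖ := by
  refine le_trans (le_of_eq ?_) (HH_l1_le _)
  refine integral_congr_ae ?_
  filter_upwards [Lp.coeFn_sub (row hB x) (row hA x), row_coe hA x, row_coe hB x] with y h1 h2 h3
  rw [h1, Pi.sub_apply, h2, h3, ← Complex.ofReal_sub, Complex.norm_real, Real.norm_eq_abs,
    abs_sub_comm]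

lemma inner_row {A : ℝ → ℝ → ℝ} (hA : SK A) (g : HH) (x : ℝ) :
    inner ℂ (row hA.1 x) g = opFun A g x := by
  rw [L2.inner_def, opFun]
  refine integral_congr_ae ?_
  filter_upwards [row_coe hA.1 x] with z hz
  rw [hz]
  simp [hA.2 z x]

lemma ae_row_mem {A : ℝ → ℝ → ℝ} (hA : SK A) :
    ∀ᵐ x ∂muI, row hA.1 x ∈ closure (Set.range (op hA.1)) := by
  have : Fact ((2 : ENNReal) ≠ ⊤) := ⟨by norm_num⟩
  let T := op hA.1
  have : Nonempty (T.ker) := ⟨0⟩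
  obtain ⟨u, hu⟩ := TopologicalSpace.exists_dense_seq T.ker
  have h : ∀ k, ∀ᵐ x ∂muI, opFun A (u k : HH) x = 0 := by
    intro k
    have h0 : T (u k : HH) = 0 := (u k).2
    have h1 := op_coe hA.1 (u k : HH)
    change (T (u k : HH) : HH) =ᵐ[muI] _ at h1
    rw [h0] at h1
    filter_upwards [h1, Lp.coeFn_zero ℂ 2 muI] with x h2 h3
    rw [← h2, h3]
    rfl
  filter_upwards [ae_all_iff.2 h] with x hx
  have horth : row hA.1 x ∈ T.kerᗮ := by
    rw [Submodule.mem_orthogonal']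
    intro g hg
    have hcl : IsClosed {v : T.ker | inner ℂ (row hA.1 x) (v : HH) = 0} :=
      isClosed_eq (by fun_prop) continuous_const
    have hsub : Set.range u ⊆ {v : T.ker | inner ℂ (row hA.1 x) (v : HH) = 0} := by
      rintro _ ⟨k, rfl⟩
      exact (inner_row hA _ x).trans (hx k)
    exact hcl.closure_subset_iff.2 hsub (hu ⟨g, hg⟩)
  rw [ContinuousLinearMap.orthogonal_ker, (op_selfAdjoint hA).adjoint_eq] at horth
  exact horth

open Polynomial Filter Topology in
lemma tendsto_L1 {A : ℝ → ℝ → ℝ} (hA : SK A) (n : ℕ) (a : Fin n → ℝ) {M : ℝ} (hM : 0 ≤ M)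
    (hAM : ∀ x y, |A x y| ≤ M) (R : ℕ → ℝ[X])
    (hR : ∀ k : ℕ, ∀ t : ℝ, |t| ≤ M →
      |(polS n a * (R k).comp (X * polS n a) - 1).eval t| ≤ 2 ∧
      |t * (polS n a * (R k).comp (X * polS n a) - 1).eval t| ≤ 1 / ((k : ℝ) + 1)) :
    Tendsto (fun k => L1 (fun x y => A x y - kq (R k) (kerPoly n a A) x y)) atTop (𝓝 0) := by
  set q : ℕ → ℝ[X] := fun k => polS n a * (R k).comp (X * polS n a) - 1 with hq
  have hsa := op_selfAdjoint hA
  have hTM := op_norm_le hA.1 hM hAM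
  have n1 : ∀ k, ‖aeval (op hA.1) (q k)‖ ≤ 2 := fun k =>
    norm_aeval_le hsa hTM (q k) (by norm_num) fun t ht => (hR k t ht).1
  have n2 : ∀ k, ‖aeval (op hA.1) (X * q k)‖ ≤ 1 / ((k : ℝ) + 1) := fun k =>
    norm_aeval_le hsa hTM (X * q k) (by positivity) fun t ht => by
      rw [eval_mul, eval_X]
      exact (hR k t ht).2
  have hlim : ∀ v ∈ closure (Set.range (op hA.1)),
      Tendsto (fun k => ‖aeval (op hA.1) (q k) v‖) atTop (𝓝 0) := by
    intro v hv
    rw [Metric.tendsto_atTop]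
    intro ε hε
    obtain ⟨_, ⟨w, rfl⟩, hw⟩ := Metric.mem_closure_iff.1 hv (ε / 4) (by positivity)
    obtain ⟨k0, hk0⟩ := exists_nat_gt (2 * ‖w‖ / ε)
    refine ⟨k0, fun k hk => ?_⟩
    rw [dist_zero_right, norm_norm]
    have e1 : aeval (op hA.1) (q k) v = aeval (op hA.1) (q k) (v - op hA.1 w) +
        aeval (op hA.1) (X * q k) w := by
      rw [mul_comm X, map_mul, aeval_X, mul_apply_eq_comp, ← ContinuousLinearMap.map_add,
        sub_add_cancel]
    have e2 : ‖aeval (op hA.1) (q k) (v - op hA.1 w)‖ ≤ 2 * ‖v - op hA.1 w‖ :=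
      ContinuousLinearMap.le_of_opNorm_le _ (n1 k) _
    have e3 : ‖aeval (op hA.1) (X * q k) w‖ ≤ 1 / ((k : ℝ) + 1) * ‖w‖ :=
      ContinuousLinearMap.le_of_opNorm_le _ (n2 k) _
    have e4 : 1 / ((k : ℝ) + 1) * ‖w‖ < ε / 2 := by
      have hk' : (k0 : ℝ) ≤ k := by exact_mod_cast hk
      rw [div_lt_iff₀ hε] at hk0
      rw [one_div, inv_mul_lt_iff₀ (by positivity)]
      nlinarith
    rw [dist_eq_norm] at hw
    rw [e1]
    refine (norm_add_le _ _).trans_lt ?_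
    linarith
  have hb : ∀ k x, ∫ y, |A x y - kq (R k) (kerPoly n a A) x y| ∂muI ≤
      ‖aeval (op hA.1) (q k) (row hA.1 x)‖ := by
    intro k x
    rw [← row_kq_kerPoly hA.1 n a (R k) x]
    exact l1_row_le hA.1 _ x
  have h0 : ∀ k x, 0 ≤ ∫ y, |A x y - kq (R k) (kerPoly n a A) x y| ∂muI :=
    fun k x => integral_nonneg fun _ => abs_nonneg _
  have := tendsto_integral_of_dominated_convergence (μ := muI)
    (F := fun k x => ∫ y, |A x y - kq (R k) (kerPoly n a A) x y| ∂muI) (f := fun _ => 0)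
    (fun _ => 2 * M) (fun k => by
      have := ((hA.1.sub ((hA.1.kerPoly n a).kq (R k))).meas
        measurable_fst measurable_snd).abs.stronglyMeasurable
      exact (this.integral_prod_right (ν := muI)).aestronglyMeasurable)
    (integrable_const _)
    (fun k => Filter.Eventually.of_forall fun x => by
      rw [Real.norm_eq_abs, abs_of_nonneg (h0 k x)]
      refine (hb k x).trans ((ContinuousLinearMap.le_of_opNorm_le _ (n1 k) _).trans ?_)
      exact mul_le_mul_of_nonneg_left (row_norm_le hA.1 hM hAM x) (by norm_num))
    (by
      filter_upwards [ae_row_mem hA] with x hx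
      exact squeeze_zero (fun k => h0 k x) (fun k => hb k x) (hlim _ hx))
  simpa [L1] using this

lemma exists_approx {U W : ℝ → ℝ → ℝ} (hU : SK U) (hW : SK W) (n : ℕ) (a : Fin n → ℝ)
    (hinj : Function.Injective fun t : ℝ => ∑ i, a i * t ^ ((i : ℕ) + 1)) (ε : ℝ) (hε : 0 < ε) :
    ∃ R : Polynomial ℝ, L1 (fun x y => U x y - kq R (kerPoly n a U) x y) ≤ ε ∧
      L1 (fun x y => W x y - kq R (kerPoly n a W) x y) ≤ ε := by
  obtain ⟨C1, hC1, h1⟩ := hU.1.exists_bound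
  obtain ⟨C2, hC2, h2⟩ := hW.1.exists_bound
  have hS : Function.Injective fun t : ℝ => t * (polS n a).eval t := by
    convert hinj using 2 with t
    simp only [polS, Polynomial.eval_finsetSum, Polynomial.eval_mul, Polynomial.eval_C,
      Polynomial.eval_pow, Polynomial.eval_X, Finset.mul_sum]
    exact Finset.sum_congr rfl fun i _ => by ring
  choose R hR using fun k : ℕ => approx_poly (polS n a) hS (M := C1 + C2 + 1) (by positivity)
    (ε := 1 / ((k : ℝ) + 1)) (by positivity)
  have t1 := tendsto_L1 hU n a (M := C1 + C2 + 1) (by positivity)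
    (fun x y => (h1 x y).trans (by linarith)) R hR
  have t2 := tendsto_L1 hW n a (M := C1 + C2 + 1) (by positivity)
    (fun x y => (h2 x y).trans (by linarith)) R hR
  obtain ⟨k, hk1, hk2⟩ :=
    ((t1.eventually (gt_mem_nhds hε)).and (t2.eventually (gt_mem_nhds hε))).exists
  exact ⟨R k, hk1.le, hk2.le⟩

lemma kerMul_assoc {A B C : ℝ → ℝ → ℝ} (hA : Kn A) (hB : Kn B) (hC : Kn C) :
    kerMul (kerMul A B) C = kerMul A (kerMul B C) := by
  ext x y
  simp only [kerMul_eq]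
  simp_rw [← integral_const_mul, ← integral_mul_const]
  rw [integral_integral_swap]
  · simp only [mul_assoc]
  · obtain ⟨c1, h1, h1'⟩ := hA.exists_bound
    obtain ⟨c2, h2, h2'⟩ := hB.exists_bound
    obtain ⟨c3, h3, h3'⟩ := hC.exists_bound
    refine Integrable.of_bound (C := c1 * c2 * c3) ?_ (Filter.Eventually.of_forall fun q => ?_)
    · exact (((hA.meas measurable_const measurable_snd).mul
        (hB.meas measurable_snd measurable_fst)).mul
        (hC.meas measurable_fst measurable_const)).aestronglyMeasurable
    · simp only [Function.uncurry, norm_mul, Real.norm_eq_abs]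
      have := h1' x q.2
      have := h2' q.2 q.1
      have := h3' q.1 y
      gcongr

lemma kerMul_comm_pow {A : ℝ → ℝ → ℝ} (hA : Kn A) (k : ℕ) :
    kerMul A (kerPow A k) = kerMul (kerPow A k) A := by
  induction k with
  | zero => rfl
  | succ k ih =>
    change kerMul A (kerMul (kerPow A k) A) = kerMul (kerMul (kerPow A k) A) A
    rw [← kerMul_assoc hA (hA.pow k) hA, ih]

lemma kerPow_symm {A : ℝ → ℝ → ℝ} (hA : SK A) (k : ℕ) (x y : ℝ) :
    kerPow A k x y = kerPow A k y x := by
  induction k generalizing x y with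
  | zero => exact hA.2 x y
  | succ k ih =>
    change kerMul (kerPow A k) A x y = kerMul (kerPow A k) A y x
    rw [← kerMul_comm_pow hA.1, kerMul_eq, kerMul_comm_pow hA.1, kerMul_eq]
    refine integral_congr_ae (Filter.Eventually.of_forall fun z => ?_)
    simp only [hA.2 x z, ih z y]
    ring

lemma SK.kerPoly {A : ℝ → ℝ → ℝ} (hA : SK A) (n : ℕ) (a : Fin n → ℝ) : SK (kerPoly n a A) :=
  ⟨hA.1.kerPoly n a, fun x y => Finset.sum_congr rfl fun i _ => by rw [kerPow_symm hA i x y]⟩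

lemma SK.memW {A : ℝ → ℝ → ℝ} (hA : SK A) : memW A :=
  ⟨hA.1.1, fun x _ y _ => hA.2 x y, hA.1.2.imp fun _ h x _ y _ => h x y⟩

/-- Truncation to the unit square. -/
def trW (V : ℝ → ℝ → ℝ) : ℝ → ℝ → ℝ := fun x y => if x ∈ I01 ∧ y ∈ I01 then V x y else 0

lemma measI : MeasurableSet I01 := measurableSet_Icc

lemma trW_SK {V : ℝ → ℝ → ℝ} (hV : memW V) : SK (trW V) := by
  obtain ⟨h1, h2, C, hC⟩ := hV
  refine ⟨⟨?_, |C|, fun x y => ?_⟩, fun x y => ?_⟩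
  · exact Measurable.ite ((measI.preimage measurable_fst).inter (measI.preimage measurable_snd))
      h1 measurable_const
  · unfold trW
    split_ifs with h
    · exact (hC x h.1 y h.2).trans (le_abs_self C)
    · simp
  · unfold trW
    by_cases hx : x ∈ I01 <;> by_cases hy : y ∈ I01 <;> simp [hx, hy]
    exact h2 x hx y hy

/-- Equality on the unit square. -/
def EqI (U V : ℝ → ℝ → ℝ) : Prop := ∀ x ∈ I01, ∀ y ∈ I01, U x y = V x y

lemma trW_EqI (V : ℝ → ℝ → ℝ) : EqI (trW V) V := fun x hx y hy => by simp [trW, hx, hy]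

lemma EqI.pow {U V : ℝ → ℝ → ℝ} (h : EqI U V) (k : ℕ) : EqI (kerPow U k) (kerPow V k) := by
  induction k with
  | zero => exact h
  | succ k ih =>
    intro x hx y hy
    refine setIntegral_congr_fun measI fun z hz => ?_
    simp only [ih x hx z hz, h z hz y hy]

lemma EqI.kerPoly {U V : ℝ → ℝ → ℝ} (h : EqI U V) (n : ℕ) (a : Fin n → ℝ) :
    EqI (kerPoly n a U) (kerPoly n a V) := fun x hx y hy =>
  Finset.sum_congr rfl fun i _ => by rw [h.pow i x hx y hy]

lemma EqI.homDensity {U V : ℝ → ℝ → ℝ} (h : EqI U V) {N : ℕ} (F : SimpleGraph (Fin N)) :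
    homDensity F U = homDensity F V := by
  refine setIntegral_congr_fun (MeasurableSet.univ_pi fun _ => measI) fun x hx => ?_
  exact Finset.prod_congr rfl fun e _ => h _ (hx e.1 trivial) _ (hx e.2 trivial)

lemma FD_kerPoly (n : ℕ) (a : Fin n → ℝ) {N : ℕ} (F : SimpleGraph (Fin N)) :
    FD (fun V => homDensity F (kerPoly n a V)) := by
  let a' : ℕ → ℝ := fun i => if h : i < n then a ⟨i, h⟩ else 0
  refine (FD_kp (anti_graph F) (fun _ => n) (fun _ => a')).congr fun V _ => ?_
  rw [homDensity_eq_DD]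
  congr 1
  ext e x y
  simp [kerPoly, kp, Finset.sum_range, a']

lemma weakIso_of_kerPoly {U W : ℝ → ℝ → ℝ} (hU : SK U) (hW : SK W) (n : ℕ) (a : Fin n → ℝ)
    (hinj : Function.Injective fun t : ℝ => ∑ i, a i * t ^ ((i : ℕ) + 1))
    (h : WeaklyIsomorphic (kerPoly n a U) (kerPoly n a W)) : WeaklyIsomorphic U W := by
  intro N F
  rw [homDensity_eq_DD, homDensity_eq_DD]
  refine iter_limit (anti_graph F) hU.1 hW.1 (Q := fun R => kq R (kerPoly n a U))
    (R := fun R => kq R (kerPoly n a W)) (fun R => (hU.1.kerPoly n a).kq R)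
    (fun R => (hW.1.kerPoly n a).kq R) (exists_approx hU hW n a hinj) fun r => ?_
  obtain ⟨L, hL⟩ := FD_kp (anti_graph F) (fun e => (r e).natDegree + 1) (fun e => (r e).coeff)
  exact hL _ _ (hU.kerPoly n a) (hW.kerPoly n a) fun G _ => h _ G.2
/-- if `p` is a real polynomial with zero constant term which is a
bijection of `ℝ`, `W ∈ 𝒲`, and `p(W)` is finitely forcible in `𝒲`, then so is `W`. -/
theorem statement4 (n : ℕ) (a : Fin n → ℝ)
    (hbij : Function.Bijective fun t : ℝ => ∑ i, a i * t ^ ((i : ℕ) + 1))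
    (W : ℝ → ℝ → ℝ) (hW : memW W)
    (h : FinitelyForcible memW (kerPoly n a W)) :
    FinitelyForcible memW W := by
  refine ⟨hW, ?_⟩
  obtain ⟨-, k, m, F, hF⟩ := h
  choose L hL using fun i => FD_kerPoly n a (F i)
  let LL : List (Σ n : ℕ, SimpleGraph (Fin n)) := (List.finRange k).flatMap L
  refine ⟨LL.length, fun i => (LL.get i).1, fun i => (LL.get i).2, fun U hU hd => ?_⟩
  have hU' := trW_SK hU
  have hW' := trW_SK hW
  have hall : ∀ G ∈ LL, homDensity G.2 (trW U) = homDensity G.2 (trW W) := by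
    intro G hG
    obtain ⟨i, rfl⟩ := List.get_of_mem hG
    rw [(trW_EqI U).homDensity, (trW_EqI W).homDensity]
    exact hd i
  have h1 : WeaklyIsomorphic (kerPoly n a (trW U)) (kerPoly n a W) := by
    refine hF _ (hU'.kerPoly n a).memW fun i => ?_
    rw [← ((trW_EqI W).kerPoly n a).homDensity]
    exact hL i _ _ hU' hW' fun G hG =>
      hall G (List.mem_flatMap.2 ⟨i, List.mem_finRange i, hG⟩)
  have h2 : WeaklyIsomorphic (trW U) (trW W) := by
    refine weakIso_of_kerPoly hU' hW' n a hbij.1 fun N G => ?_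
    rw [((trW_EqI W).kerPoly n a).homDensity]
    exact h1 N G
  intro N G
  rw [← (trW_EqI U).homDensity, ← (trW_EqI W).homDensity]
  exact h2 N G
end
end
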